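/- arXiv:1705.06372 — 3 statements merged into one kernel-verified Lean document; each statement's English description precedes it below -/
import Mathlib

section
/- Let q = 2^h, let S be a subgroup of the additive group (F_q,+) of order q/4, and let α, β ∈ F_q. Suppose that the additive subgroups S + αS, S + βS, αS + βS and (α+1)S + (β+1)S of (F_q,+) all have order q/2. Then either (a) β = α + 1 and there exists γ ∈ F_q with S = {x ∈ F_q : Tr(γx) = 0 and Tr(αγx) = 0}, or (b) 3 divides h, α and β lie in the subfield F_8 of F_q (i.e. α^8 = α and β^8 = β), and S ∩ αS ∩ βS ∩ (α+1)S ∩ (β+1)S is a subgroup of (F_q,+) of order q/8; moreover, in case (b), if S + αS = {x ∈ F_q : Tr(γx) = 0} for some γ ∈ F_q, then S ∩ αS ∩ βS ∩ (α+1)S ∩ (β+1)S = {x ∈ F_q : Tr(xyγ) = 0 for all y ∈ F_8}. -/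
open scoped Classical

noncomputable section

variable {K : Type*} [Field K]

/-- The absolute trace-style sum `x + x² + x⁴ + ⋯ + x^(2^(h-1))`
(it lands in the prime subfield `F₂` when `|K| = 2^h`). -/
def Tr (h : ℕ) (x : K) : K := ∑ i ∈ Finset.range h, x ^ 2 ^ i

/-- `F₂`-independence of a tuple of elements of a field of characteristic two:
no nontrivial combination with coefficients `0`/`1` vanishes. -/
def F2Indep {n : ℕ} (v : Fin n → K) : Prop :=
  ∀ c : Fin n → K, (∀ i, c i = 0 ∨ c i = 1) → ∑ i, c i * v i = 0 → ∀ i, c i = 0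

/-- The `F₂`-span of a tuple of elements of a field of characteristic two. -/
def F2Span {n : ℕ} (v : Fin n → K) : Set K :=
  {x | ∃ c : Fin n → K, (∀ i, c i = 0 ∨ c i = 1) ∧ x = ∑ i, c i * v i}

/-- `α·S` for an additive subgroup `S` of the field. -/
def smulSub (α : K) (S : AddSubgroup K) : AddSubgroup K :=
  S.map (AddMonoidHom.mulLeft α)

/-- Points of `PG(2,q)`: one-dimensional subspaces of `K³`. -/
abbrev Pt (K : Type*) [Field K] := Projectivization K (Fin 3 → K)

/-- The point `(a : b : c)` of `PG(2,q)`. -/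
def pt3 (a b c : K) (habc : ¬(a = 0 ∧ b = 0 ∧ c = 0)) : Pt K :=
  Projectivization.mk K ![a, b, c] (fun h0 => habc
    ⟨by simpa using congrFun h0 0, by simpa using congrFun h0 1, by simpa using congrFun h0 2⟩)

/-- The point `(a : b)` of `PG(1,q)`. -/
def pt2 (a b : K) (hab : ¬(a = 0 ∧ b = 0)) : Projectivization K (Fin 2 → K) :=
  Projectivization.mk K ![a, b] (fun h0 => hab
    ⟨by simpa using congrFun h0 0, by simpa using congrFun h0 1⟩)

/-- An `F₂`-linear set of points of `PG(1,q)`: in characteristic two, the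
`F₂`-subspaces of `K²` are exactly its additive subgroups. -/
def IsF2Linear (T : Set (Projectivization K (Fin 2 → K))) : Prop :=
  ∃ U : AddSubgroup (Fin 2 → K),
    T = {P | ∃ u : Fin 2 → K, ∃ hu : u ≠ 0, u ∈ U ∧ Projectivization.mk K u hu = P}

/-- Lines of `PG(2,q)`: two-dimensional subspaces of `K³`. -/
def IsLine (L : Submodule K (Fin 3 → K)) : Prop := Module.finrank K L = 2

/-- Incidence of a point with a line. -/
def OnLine (P : Pt K) (L : Submodule K (Fin 3 → K)) : Prop := P.submodule ≤ L

/-- The number of points of `A` lying on the line `L`. -/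
def secantCount (A : Set (Pt K)) (L : Submodule K (Fin 3 → K)) : ℕ :=
  {P ∈ A | OnLine P L}.ncard

/-- A KM-arc of type `t`: `q+t` points meeting every line in `0`, `2` or `t` points. -/
def IsKMArc (q t : ℕ) (A : Set (Pt K)) : Prop :=
  A.ncard = q + t ∧ ∀ L : Submodule K (Fin 3 → K), IsLine L →
    secantCount A L = 0 ∨ secantCount A L = 2 ∨ secantCount A L = t

/-- The projectivity of `PG(2,q)` induced by an element of `GL(3,q)`. -/
def projMap (f : (Fin 3 → K) ≃ₗ[K] (Fin 3 → K)) : Pt K → Pt K :=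
  Projectivization.map f.toLinearMap f.injective

/-- `f` induces an elation with axis `L` and centre `R`: it fixes every point of `L`
and maps every line through `R` to itself. -/
def IsElation (f : (Fin 3 → K) ≃ₗ[K] (Fin 3 → K)) (L : Submodule K (Fin 3 → K))
    (R : Pt K) : Prop :=
  IsLine L ∧ OnLine R L ∧ (∀ P : Pt K, OnLine P L → projMap f P = P) ∧
    ∀ M : Submodule K (Fin 3 → K), IsLine M → OnLine R M →
      ∀ P : Pt K, OnLine P M → OnLine (projMap f P) M

/-- `f` induces an elation with axis `L` (for some centre on `L`). -/
def IsElationAxis (f : (Fin 3 → K) ≃ₗ[K] (Fin 3 → K)) (L : Submodule K (Fin 3 → K)) : Prop :=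
  ∃ R : Pt K, IsElation f L R

/-- The projectivity induced by `f` stabilises the point set `A`. -/
def Stabilises (f : (Fin 3 → K) ≃ₗ[K] (Fin 3 → K)) (A : Set (Pt K)) : Prop :=
  projMap f '' A = A

/-- `N` lies on every `t`-secant of `A` (i.e. `N` is the `t`-nucleus). -/
def IsNucleus (t : ℕ) (A : Set (Pt K)) (N : Pt K) : Prop :=
  ∀ L : Submodule K (Fin 3 → K), IsLine L → secantCount A L = t → OnLine N L

/-- An elation KM-arc of type `t` with `t`-nucleus `N` and elation line `linf`:
for every `t`-secant `L ≠ linf`, the group of elations with axis `linf` stabilising `A`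
acts transitively on `A ∩ L`. -/
def IsElationKMArc (q t : ℕ) (A : Set (Pt K)) (N : Pt K)
    (linf : Submodule K (Fin 3 → K)) : Prop :=
  IsKMArc q t A ∧ IsLine linf ∧ OnLine N linf ∧ IsNucleus t A N ∧
    ∀ L : Submodule K (Fin 3 → K), IsLine L → secantCount A L = t → L ≠ linf →
      ∀ P ∈ A, OnLine P L → ∀ Q ∈ A, OnLine Q L →
        ∃ f : (Fin 3 → K) ≃ₗ[K] (Fin 3 → K),
          IsElationAxis f linf ∧ Stabilises f A ∧ projMap f P = Q

/-- A translation KM-arc with translation line `l`: the group of elations with axis `l`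
stabilising `A` acts transitively on `A \ l`. -/
def IsTranslationKMArc (A : Set (Pt K)) (l : Submodule K (Fin 3 → K)) : Prop :=
  IsLine l ∧ ∀ P ∈ A, ¬OnLine P l → ∀ Q ∈ A, ¬OnLine Q l →
    ∃ f : (Fin 3 → K) ≃ₗ[K] (Fin 3 → K),
      IsElationAxis f l ∧ Stabilises f A ∧ projMap f P = Q

/-- The line `X = 0` of `PG(2,q)`. -/
def lineX0 (K : Type*) [Field K] : Submodule K (Fin 3 → K) :=
  LinearMap.ker (LinearMap.proj (R := K) (φ := fun _ : Fin 3 => K) 0)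

/-- The line `Y = aX` of `PG(2,q)`. -/
def lineYaX (a : K) : Submodule K (Fin 3 → K) where
  carrier := {v | v 1 = a * v 0}
  add_mem' := by
    intro v w hv hw
    simp only [Set.mem_setOf_eq, Pi.add_apply] at hv hw ⊢
    rw [hv, hw]; ring
  zero_mem' := by simp
  smul_mem' := by
    intro c v hv
    simp only [Set.mem_setOf_eq, Pi.smul_apply, smul_eq_mul] at hv ⊢
    rw [hv]; ring

/-- The point set of the `q/8`-construction (Theorem 4.4 of the paper), built from
`F₂`-independent `a 0, a 1, a 2` and coset representatives `b 0, b 1, b 2`. -/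
def q8Arc (h : ℕ) (a b : Fin 3 → K) : Set (Pt K) :=
  {P | ∃ x : K, (∀ i, Tr h (a i ^ 2 * x) = 0) ∧ P = pt3 0 1 x (by simp)}
    ∪ {P | ∃ l : Fin 3 → K, (∀ i, l i = 0 ∨ l i = 1) ∧ ∃ s : K, (∀ i, Tr h (a i * s) = 0) ∧
        P = pt3 1 (l 0 * a 0 + l 1 * a 1 + l 2 * a 2)
          ((l 0 + l 1 + l 2 + l 1 * l 2) * b 0 + (l 1 + l 2 + l 0 * l 2) * b 1
            + (l 2 + l 0 * l 1) * b 2 + s) (by simp)}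

/-- The point set of the `q/16`-construction (Theorem 5.2 of the paper). -/
def q16Arc (h : ℕ) (a : Fin 4 → K) (α : K) (b : Fin 3 → K) : Set (Pt K) :=
  {P | ∃ x : K, Tr h (a 0 * (a 0 + a 3) * x) = 0 ∧ Tr h (a 1 * (a 1 + a 3) * x) = 0 ∧
      Tr h (a 2 * (a 2 + a 3) * x) = 0 ∧ Tr h (a 3 * α * x) = 1 ∧ P = pt3 0 1 x (by simp)}
    ∪ {P | ∃ l : Fin 4 → K, (∀ i, l i = 0 ∨ l i = 1) ∧ ∃ s : K, (∀ i, Tr h (a i * s) = 0) ∧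
        P = pt3 1 (l 0 * a 0 + l 1 * a 1 + l 2 * a 2 + l 3 * a 3)
          ((l 0 + l 1 + l 2 + l 1 * l 2) * b 0 + (l 1 + l 2 + l 0 * l 2) * b 1
            + (l 2 + l 0 * l 1) * b 2 + s) (by simp)}

/-- The semilinear collineation of `PG(2,q)` sending the point spanned by `v`
to the point spanned by `M (ψ ∘ v)`. -/
def frobMap (ψ : K ≃+* K) (M : (Fin 3 → K) ≃ₗ[K] (Fin 3 → K)) (P : Pt K) : Pt K :=
  Projectivization.mk K (M fun i => ψ (P.rep i)) (by
    rw [LinearEquiv.map_ne_zero_iff]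
    intro h0
    apply P.rep_nonzero
    funext i
    have h2 : P.rep i = 0 := ψ.injective (by rw [map_zero]; exact congrFun h0 i)
    simpa using h2)

theorem F8aux_char {K : Type*} [Field K] [Fintype K] (h : ℕ)
    (hcard : Fintype.card K = 2 ^ h) : CharP K 2 := by
  have h0 : h ≠ 0 := by
    rintro rfl
    have := Fintype.one_lt_card (α := K)
    omega
  obtain ⟨p, hp⟩ := CharP.exists K
  obtain ⟨n, hpp, hn⟩ := FiniteField.card K p
  rw [hcard] at hn
  have : p ∣ 2 := hpp.dvd_of_dvd_pow (n := h) (by rw [hn]; exact dvd_pow_self _ n.ne_zero)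
  rw [(Nat.prime_dvd_prime_iff_eq hpp Nat.prime_two).1 this] at hp
  exact hp

theorem F8aux_perp {K : Type*} [Field K] [Fintype K] (h : ℕ)
    (hcard : Fintype.card K = 2 ^ h) :
    ∃ perp : AddSubgroup K → AddSubgroup K,
      (∀ S y, y ∈ perp S ↔ ∀ x ∈ S, Tr h (x * y) = 0) ∧
      (∀ S, perp (perp S) = S) ∧ ∀ S : AddSubgroup K, Nat.card S * Nat.card (perp S) = 2 ^ h := by
  have := F8aux_char h hcard
  let : Algebra (ZMod 2) K := ZMod.algebra K 2
  have : Fact (Nat.Prime 2) := ⟨Nat.prime_two⟩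
  have hfr : Module.finrank (ZMod 2) K = h := by
    have h1 := Module.card_eq_pow_finrank (K := ZMod 2) (V := K)
    rw [hcard, ZMod.card] at h1
    exact (Nat.pow_right_injective (le_refl 2) h1).symm
  have hTr : ∀ x : K, Tr h x = 0 ↔ Algebra.trace (ZMod 2) K x = 0 := by
    intro x
    have := FiniteField.algebraMap_trace_eq_sum_pow (ZMod 2) K x
    rw [hfr, Nat.card_zmod] at this
    unfold Tr
    rw [← this]
    simp
  have hnd := traceForm_nondegenerate (ZMod 2) K
  have hrefl := (Algebra.traceForm_isSymm (ZMod 2) (S := K)).isRefl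
  refine ⟨fun S => ((Algebra.traceForm (ZMod 2) K).orthogonal
    (AddSubgroup.toZModSubmodule 2 S)).toAddSubgroup, ?_, ?_, ?_⟩
  · intro S y
    simp only [Submodule.mem_toAddSubgroup, LinearMap.BilinForm.mem_orthogonal_iff,
      AddSubgroup.mem_toZModSubmodule, hTr]
    rfl
  · intro S
    simp only [Submodule.toAddSubgroup_toZModSubmodule]
    rw [LinearMap.BilinForm.orthogonal_orthogonal hnd hrefl]
    rfl
  · intro S
    have h1 := LinearMap.BilinForm.finrank_add_finrank_orthogonal hrefl (AddSubgroup.toZModSubmodule 2 S)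
    have h2 : (Algebra.traceForm (ZMod 2) K).orthogonal ⊤ = ⊥ := 
      LinearMap.BilinForm.orthogonal_top_eq_bot hnd
    rw [h2, inf_bot_eq, finrank_bot, hfr, add_zero] at h1
    have c1 := Module.natCard_eq_pow_finrank (K := ZMod 2) (V := AddSubgroup.toZModSubmodule 2 S)
    have c2 := Module.natCard_eq_pow_finrank (K := ZMod 2)
      (V := (Algebra.traceForm (ZMod 2) K).orthogonal (AddSubgroup.toZModSubmodule 2 S))
    rw [Nat.card_zmod] at c1 c2
    rw [← h1, pow_add, ← c1, ← c2]
    rfl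

theorem F8aux_alg {K : Type*} [Field K] [CharP K 2] (a b u v p r s t : K)
    (ha0 : a ≠ 0) (ha1 : a ≠ 1) (ha : a ^ 2 + a + 1 ≠ 0) (hb1 : b ≠ 1) (hab : b ≠ a)
    (hab' : b ≠ a + 1)
    (hu : u = 1 ∨ u = a ∨ u = a + 1) (hv : v = 1 ∨ v = a ∨ v = a + 1) (huv : b * u = v)
    (hp : p = 1 ∨ p = a ∨ p = a + 1) (hr : r = 1 ∨ r = a ∨ r = a + 1) (hpr : p * b = r * a)
    (hs : s = 1 ∨ s = a ∨ s = a + 1) (ht : t = 1 ∨ t = a ∨ t = a + 1)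
    (hst : s * (b + 1) = t * (a + 1)) :
    a ^ 3 + a + 1 = 0 ∨ a ^ 3 + a ^ 2 + 1 = 0 := by
  have h2 : (2 : K) = 0 := CharTwo.two_eq_zero
  have ha1' : a + 1 ≠ 0 := by intro h; apply ha1; linear_combination h - h2
  have hr' : p ≠ r := by
    rintro rfl
    have : p ≠ 0 := by rcases hp with rfl | rfl | rfl <;> simp_all
    exact hab (mul_left_cancel₀ this hpr)
  have hs' : s ≠ t := by
    rintro rfl
    have : s ≠ 0 := by rcases hs with rfl | rfl | rfl <;> simp_all
    exact hab (by linear_combination (mul_left_cancel₀ this hst))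
  have hu' : u ≠ v := by
    rintro rfl
    have : u ≠ 0 := by rcases hu with rfl | rfl | rfl <;> simp_all
    exact hb1 (mul_right_cancel₀ this (by rw [huv, one_mul]))
  rcases hu with rfl | rfl | rfl <;> rcases hv with rfl | rfl | rfl
  · grind
  · grind
  · grind
  · clear hs ht hst hs'
    rcases hp with rfl | rfl | rfl <;> rcases hr with rfl | rfl | rfl <;> grind
  · grind
  · clear hs ht hst hs'
    rcases hp with rfl | rfl | rfl <;> rcases hr with rfl | rfl | rfl <;> grind
  · clear hs ht hst hs'
    rcases hp with rfl | rfl | rfl <;> rcases hr with rfl | rfl | rfl <;> grind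
  · clear hp hr hpr hr'
    rcases hs with rfl | rfl | rfl <;> rcases ht with rfl | rfl | rfl <;> grind
  · grind

theorem F8aux_F8 {K : Type*} [Field K] [CharP K 2] (a y : K)
    (ha : a ^ 3 + a + 1 = 0 ∨ a ^ 3 + a ^ 2 + 1 = 0) (hy : y ^ 8 = y) :
    y = 0 ∨ y = 1 ∨ y = a ∨ y = a + 1 ∨ y = a ^ 2 ∨ y = a ^ 2 + 1 ∨ y = a ^ 2 + a
     ∨ y = a ^ 2 + a + 1 := by
  have h2 : (2 : K) = 0 := CharTwo.two_eq_zero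
  have key : (y * (y + 1)) * ((y + a) * (y + a + 1)) * ((y + a ^ 2) * (y + a ^ 2 + 1)) *
      ((y + a ^ 2 + a) * (y + a ^ 2 + a + 1)) = 0 := by
    rcases ha with h | h <;> grind
  have e : ∀ z : K, y + z = 0 → y = z := fun z hz => by linear_combination hz - z * h2
  simp only [mul_eq_zero, add_assoc] at key
  rcases key with (((h | h) | (h | h)) | (h | h)) | (h | h)
  · simp [h]
  all_goals
    have := e _ h
    simp only [add_assoc]
    tauto

theorem F8aux_pow {K : Type*} [Field K] [CharP K 2] (a : K)
    (ha : a ^ 3 + a + 1 = 0 ∨ a ^ 3 + a ^ 2 + 1 = 0) : a ^ 7 = 1 := by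
  have h2 : (2 : K) = 0 := CharTwo.two_eq_zero
  rcases ha with h | h <;> grind

theorem F8aux_dvd {K : Type*} [Field K] [Fintype K] (h : ℕ) (hcard : Fintype.card K = 2 ^ h)
    (a : K) (ha : a ^ 7 = 1) (ha1 : a ≠ 1) : 3 ∣ h := by
  have h7 : orderOf a = 7 := by
    have : Fact (Nat.Prime 7) := ⟨by norm_num⟩
    exact orderOf_eq_prime ha ha1
  have ha0 : a ≠ 0 := by rintro rfl; simp at ha
  have h1 := FiniteField.pow_card_sub_one_eq_one a ha0
  have h3 := orderOf_dvd_of_pow_eq_one h1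
  rw [h7, hcard] at h3
  have h4 := Nat.one_le_two_pow (n := h)
  have h5 : 2 ^ h % 7 = 1 := by omega
  rw [← Nat.div_add_mod h 3, pow_add, pow_mul, Nat.mul_mod, Nat.pow_mod] at h5
  have : h % 3 < 3 := Nat.mod_lt _ (by norm_num)
  norm_num at h5
  interval_cases hh : h % 3 <;> simp_all
  omega

theorem F8aux_Tr_add {K : Type*} [Field K] [CharP K 2] (h : ℕ) (x y : K) :
    Tr h (x + y) = Tr h x + Tr h y := by
  unfold Tr
  rw [← Finset.sum_add_distrib]
  exact Finset.sum_congr rfl fun i _ => add_pow_char_pow x y 2 i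

theorem F8aux_mem_smulSub {K : Type*} [Field K] (a : K) (S : AddSubgroup K) (x : K) :
    x ∈ smulSub a S ↔ ∃ s ∈ S, a * s = x := by
  simp [smulSub, AddSubgroup.mem_map]

theorem F8aux_smulSub_one {K : Type*} [Field K] (S : AddSubgroup K) : smulSub 1 S = S := by
  ext x
  simp [F8aux_mem_smulSub]

theorem F8aux_mem_smulSub' {K : Type*} [Field K] (a : K) (ha : a ≠ 0) (S : AddSubgroup K) (x : K) :
    x ∈ smulSub a S ↔ a⁻¹ * x ∈ S := by
  rw [F8aux_mem_smulSub]
  constructor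
  · rintro ⟨s, hs, rfl⟩
    rwa [inv_mul_cancel_left₀ ha]
  · intro hx
    exact ⟨_, hx, mul_inv_cancel_left₀ ha x⟩

theorem F8aux_W {K : Type*} [Field K] [Fintype K] [CharP K 2] (W : AddSubgroup K)
    (hW : Nat.card W = 4)
    (a g : K) (ha0 : a ≠ 0) (ha1 : a ≠ 1) (hg : g ≠ 0) (h1 : g ∈ W) (h2 : a * g ∈ W) (u : K) :
    u ∈ W ↔ u = 0 ∨ u = g ∨ u = a * g ∨ u = (a + 1) * g := by
  have h20 : (2 : K) = 0 := CharTwo.two_eq_zero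
  have h3 : (a + 1) * g ∈ W := by rw [add_mul, one_mul]; exact W.add_mem h2 h1
  have hsub : (({0, g, a * g, (a + 1) * g} : Finset K) : Set K) ⊆ (W : Set K) := by
    intro x hx
    simp only [Finset.coe_insert, Finset.coe_singleton, Set.mem_insert_iff,
      Set.mem_singleton_iff] at hx
    rcases hx with rfl | rfl | rfl | rfl
    · exact W.zero_mem
    all_goals assumption
  have hc : ({0, g, a * g, (a + 1) * g} : Finset K).card = 4 := by
    rw [Finset.card_insert_of_notMem, Finset.card_insert_of_notMem, Finset.card_pair]
    all_goals
      try simp only [Finset.mem_insert, Finset.mem_singleton]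
      grind
  have := Set.eq_of_subset_of_ncard_le hsub (by
    rw [Set.ncard_coe_finset, hc]
    exact le_of_eq hW) (Set.toFinite _)
  rw [← SetLike.mem_coe, ← this]
  simp

/-- The subfield of order eight as an additive group. -/
def F8grp (K : Type*) [Field K] [CharP K 2] : AddSubgroup K where
  carrier := {y | y ^ 8 = y}
  zero_mem' := by simp
  add_mem' := by
    intro a b ha hb
    have h8 := add_pow_char_pow a b 2 3
    norm_num at h8
    change (a + b) ^ 8 = a + b
    change a ^ 8 = a at ha
    change b ^ 8 = b at hb
    rw [h8, ha, hb]
  neg_mem' := by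
    intro a ha
    change (-a) ^ 8 = -a
    rw [CharTwo.neg_eq]
    exact ha

theorem F8aux_mem {K : Type*} [Field K] [CharP K 2] (y : K) : y ∈ F8grp K ↔ y ^ 8 = y := Iff.rfl

theorem F8aux_mul {K : Type*} [Field K] [CharP K 2] {x y : K} (hx : x ∈ F8grp K)
    (hy : y ∈ F8grp K) : x * y ∈ F8grp K := by
  rw [F8aux_mem] at *
  rw [mul_pow, hx, hy]

theorem F8aux_inv {K : Type*} [Field K] [CharP K 2] {x : K} (hx : x ∈ F8grp K) :
    x⁻¹ ∈ F8grp K := by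
  rw [F8aux_mem] at *
  rw [inv_pow, hx]

theorem F8aux_one {K : Type*} [Field K] [CharP K 2] : (1 : K) ∈ F8grp K := one_pow _

theorem F8aux_card {K : Type*} [Field K] [Fintype K] [CharP K 2] (a : K)
    (ha : a ^ 3 + a + 1 = 0 ∨ a ^ 3 + a ^ 2 + 1 = 0) : Nat.card (F8grp K) = 8 := by
  have h2 : (2 : K) = 0 := CharTwo.two_eq_zero
  have h7 := F8aux_pow a ha
  have ha8 : a ∈ F8grp K := by
    rw [F8aux_mem]
    linear_combination a * h7
  have ha1 : a ≠ 1 := by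
    rintro rfl
    rcases ha with h | h <;> grind
  have ha0 : a ≠ 0 := by
    rintro rfl
    simp at h7
  have heq : (F8grp K : Set K) = (({0, 1, a, a + 1, a ^ 2, a ^ 2 + 1, a ^ 2 + a,
      a ^ 2 + a + 1} : Finset K) : Set K) := by
    ext y
    simp only [Finset.coe_insert, Finset.coe_singleton, Set.mem_insert_iff,
      Set.mem_singleton_iff]
    constructor
    · intro hy
      exact F8aux_F8 a y ha hy
    · have haa : a ^ 2 ∈ F8grp K := by rw [sq]; exact F8aux_mul ha8 ha8
      have h1 := F8aux_one (K := K)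
      rintro (rfl | rfl | rfl | rfl | rfl | rfl | rfl | rfl)
      · exact (F8grp K).zero_mem
      · exact h1
      · exact ha8
      · exact add_mem ha8 h1
      · exact haa
      · exact add_mem haa h1
      · exact add_mem haa ha8
      · exact add_mem (add_mem haa ha8) h1
  change (F8grp K : Set K).ncard = 8
  rw [heq, Set.ncard_coe_finset]
  have hq : a ^ 2 + a ≠ 0 := by grind
  have hq1 : a ^ 2 + a + 1 ≠ 0 := by rcases ha with h | h <;> grind
  repeat rw [Finset.card_insert_of_notMem]
  · simp
  all_goals
    simp only [Finset.mem_insert, Finset.mem_singleton]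
    clear heq h7 ha8 ha
    grind

theorem lemma_OKofF8
    {K : Type*} [Field K] [Fintype K] (h : ℕ)
    (hcard : Fintype.card K = 2 ^ h)
    (S : AddSubgroup K) (hS : Nat.card S = 2 ^ h / 4) (α β : K)
    (h1 : Nat.card (S ⊔ smulSub α S : AddSubgroup K) = 2 ^ h / 2)
    (h2 : Nat.card (S ⊔ smulSub β S : AddSubgroup K) = 2 ^ h / 2)
    (h3 : Nat.card (smulSub α S ⊔ smulSub β S : AddSubgroup K) = 2 ^ h / 2)
    (h4 : Nat.card (smulSub (α + 1) S ⊔ smulSub (β + 1) S : AddSubgroup K) = 2 ^ h / 2) :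
    (β = α + 1 ∧
      ∃ γ : K, (S : Set K) = {x : K | Tr h (γ * x) = 0 ∧ Tr h (α * γ * x) = 0}) ∨
    (3 ∣ h ∧ α ^ 8 = α ∧ β ^ 8 = β ∧
      Nat.card (S ⊓ smulSub α S ⊓ smulSub β S ⊓ smulSub (α + 1) S ⊓ smulSub (β + 1) S :
        AddSubgroup K) = 2 ^ h / 8 ∧
      ∀ γ : K, ((S ⊔ smulSub α S : AddSubgroup K) : Set K) = {x : K | Tr h (γ * x) = 0} →
        ((S ⊓ smulSub α S ⊓ smulSub β S ⊓ smulSub (α + 1) S ⊓ smulSub (β + 1) S :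
            AddSubgroup K) : Set K)
          = {x : K | ∀ y : K, y ^ 8 = y → Tr h (x * y * γ) = 0}) := by
  have := F8aux_char h hcard
  have h20 : (2 : K) = 0 := CharTwo.two_eq_zero
  obtain ⟨perp, hperp, hpp, hpc⟩ := F8aux_perp h hcard
  have Tr0 : Tr h (0 : K) = 0 := by simp [Tr]
  have hh2 : 2 ≤ h := by
    have hpos : 0 < Nat.card S := Nat.card_pos
    rw [hS] at hpos
    by_contra hlt
    have : h < 2 := by omega
    interval_cases h <;> simp at hpos
  obtain ⟨k, rfl⟩ := Nat.exists_eq_add_of_le hh2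
  have hk : 0 < 2 ^ k := by positivity
  have hp1 : 2 ^ (2 + k) = 4 * 2 ^ k := by ring
  have hWc : Nat.card (perp S) = 4 := by
    have e := hpc S
    rw [hS, hp1, Nat.mul_div_cancel_left _ (by norm_num : 0 < 4)] at e
    nlinarith
  set W := perp S with hWdef
  have two : ∀ a b : K, Nat.card (smulSub a S ⊔ smulSub b S : AddSubgroup K) = 2 ^ (2 + k) / 2 →
      ∃ w, w ≠ 0 ∧ a * w ∈ W ∧ b * w ∈ W ∧ ∀ w', a * w' ∈ W → b * w' ∈ W → w' = 0 ∨ w' = w := by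
    intro a b hab
    have hm : ∀ y, y ∈ perp (smulSub a S ⊔ smulSub b S) ↔ a * y ∈ W ∧ b * y ∈ W := by
      intro y
      rw [hperp, hWdef, hperp, hperp]
      constructor
      · intro H
        refine ⟨fun x hx => ?_, fun x hx => ?_⟩
        · have := H (a * x) (AddSubgroup.mem_sup_left ((F8aux_mem_smulSub _ _ _).2 ⟨x, hx, rfl⟩))
          rw [← this]; congr 1; ring
        · have := H (b * x) (AddSubgroup.mem_sup_right ((F8aux_mem_smulSub _ _ _).2 ⟨x, hx, rfl⟩))
          rw [← this]; congr 1; ring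
      · rintro ⟨H1, H2⟩ x hx
        obtain ⟨x1, hx1, x2, hx2, rfl⟩ := AddSubgroup.mem_sup.1 hx
        obtain ⟨s, hs, rfl⟩ := (F8aux_mem_smulSub _ _ _).1 hx1
        obtain ⟨t, ht, rfl⟩ := (F8aux_mem_smulSub _ _ _).1 hx2
        have e : (a * s + b * t) * y = s * (a * y) + t * (b * y) := by ring
        rw [e, F8aux_Tr_add, H1 s hs, H2 t ht, add_zero]
    have hc : Nat.card (perp (smulSub a S ⊔ smulSub b S)) = 2 := by
      have e := hpc (smulSub a S ⊔ smulSub b S)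
      have e2 : 2 ^ (2 + k) / 2 = 2 * 2 ^ k := by omega
      rw [hab, e2, hp1] at e
      nlinarith
    obtain ⟨w, hw, hw'⟩ := (Nat.card_eq_two_iff' (0 : perp (smulSub a S ⊔ smulSub b S))).1 hc
    refine ⟨w.1, fun h0 => hw (Subtype.ext h0), ((hm _).1 w.2).1, ((hm _).1 w.2).2, ?_⟩
    intro w' ha hb
    by_contra hcon
    push Not at hcon
    have := hw' ⟨w', (hm _).2 ⟨ha, hb⟩⟩ (fun h0 => hcon.1 (congrArg Subtype.val h0))
    exact hcon.2 (congrArg Subtype.val this)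
  have big : ∀ w : K, ¬ ∀ u ∈ W, u = 0 ∨ u = w := by
    intro w H
    have hsub : (W : Set K) ⊆ (({0, w} : Finset K) : Set K) := by
      intro u hu
      simpa using H u hu
    have h5 := Set.ncard_le_ncard hsub (Set.toFinite _)
    rw [Set.ncard_coe_finset] at h5
    have h6 : ({0, w} : Finset K).card ≤ 2 := Finset.card_le_two
    have h7 : (W : Set K).ncard = 4 := hWc
    omega
  have h1' := two 1 α (by rw [F8aux_smulSub_one]; exact h1)
  have h2' := two 1 β (by rw [F8aux_smulSub_one]; exact h2)
  have h3' := two α β h3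
  have h4' := two (α + 1) (β + 1) h4
  simp only [one_mul] at h1' h2'
  obtain ⟨g, hg, hgW, hagW, huniq⟩ := h1'
  have ha0 : α ≠ 0 := by
    rintro rfl
    exact big g fun u hu => huniq u hu (by simp [W.zero_mem])
  have ha1 : α ≠ 1 := by
    rintro rfl
    exact big g fun u hu => huniq u hu (by simpa)
  have hW := F8aux_W W hWc α g ha0 ha1 hg hgW hagW
  have haF4 : α ^ 2 + α + 1 ≠ 0 := by
    intro h0
    have h5 := huniq (α * g) hagW (by rw [hW]; grind)
    grind
  have hSmem : ∀ x, x ∈ S ↔ ∀ w ∈ W, Tr (2 + k) (w * x) = 0 := by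
    intro x
    conv_lhs => rw [← hpp S]
    rw [hperp]
  have hSmem2 : ∀ x, x ∈ S ↔ Tr (2 + k) (g * x) = 0 ∧ Tr (2 + k) (α * g * x) = 0 := by
    intro x
    rw [hSmem]
    constructor
    · intro H
      exact ⟨H _ hgW, H _ hagW⟩
    · rintro ⟨H1, H2⟩ w hw
      rcases (hW w).1 hw with rfl | rfl | rfl | rfl
      · rw [zero_mul, Tr0]
      · exact H1
      · exact H2
      · rw [show (α + 1) * g * x = α * g * x + g * x by ring, F8aux_Tr_add, H1, H2, add_zero]
  by_cases hba : β = α + 1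
  · left
    refine ⟨hba, g, ?_⟩
    ext x
    exact hSmem2 x
  right
  have hb0 : β ≠ 0 := by
    rintro rfl
    obtain ⟨w, -, -, -, hu⟩ := h2'
    exact big w fun u hu' => hu u hu' (by simp [W.zero_mem])
  have hb1 : β ≠ 1 := by
    rintro rfl
    obtain ⟨w, -, -, -, hu⟩ := h2'
    exact big w fun u hu' => hu u hu' (by simpa)
  have hab : β ≠ α := by
    rintro rfl
    obtain ⟨w, -, -, -, hu⟩ := h3'
    refine big (β * w) fun u hu' => ?_
    have := hu (β⁻¹ * u) (by rwa [mul_inv_cancel_left₀ ha0]) (by rwa [mul_inv_cancel_left₀ ha0])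
    rcases this with h0 | h0
    · left; simpa [ha0] using h0
    · right; rw [← h0, mul_inv_cancel_left₀ ha0]
  have hα1 : α + 1 ≠ 0 := by intro h; apply ha1; linear_combination h - h20
  have hβ1 : β + 1 ≠ 0 := by intro h; apply hb1; linear_combination h - h20
  have hWne : ∀ u, u ≠ 0 → u ∈ W → ∃ c, (c = 1 ∨ c = α ∨ c = α + 1) ∧ u = c * g := by
    intro u hu hu'
    rcases (hW u).1 hu' with h0 | h0 | h0 | h0
    · exact absurd h0 hu
    · exact ⟨1, by simp, by simpa⟩
    · exact ⟨α, by simp, h0⟩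
    · exact ⟨α + 1, by simp, h0⟩
  obtain ⟨w2, hw2, m2, m2', -⟩ := h2'
  obtain ⟨w3, hw3, m3, m3', -⟩ := h3'
  obtain ⟨w4, hw4, m4, m4', -⟩ := h4'
  obtain ⟨u, hu, eu⟩ := hWne _ hw2 m2
  obtain ⟨v, hv, ev⟩ := hWne _ (mul_ne_zero hb0 hw2) m2'
  obtain ⟨p, hp, ep⟩ := hWne _ (mul_ne_zero ha0 hw3) m3
  obtain ⟨r, hr, er⟩ := hWne _ (mul_ne_zero hb0 hw3) m3'
  obtain ⟨s, hs, es⟩ := hWne _ (mul_ne_zero hα1 hw4) m4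
  obtain ⟨t, ht, et⟩ := hWne _ (mul_ne_zero hβ1 hw4) m4'
  have huv : β * u = v := mul_right_cancel₀ hg (by rw [← ev, eu]; ring)
  have hpr : p * β = r * α :=
    mul_right_cancel₀ (mul_ne_zero hg hw3) (by linear_combination -β * w3 * ep + α * w3 * er)
  have hst : s * (β + 1) = t * (α + 1) :=
    mul_right_cancel₀ (mul_ne_zero hg hw4)
      (by linear_combination -(β + 1) * w4 * es + (α + 1) * w4 * et)
  have hF := F8aux_alg α β u v p r s t ha0 ha1 haF4 hb1 hab hba hu hv huv hp hr hpr hs ht hst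
  have ha7 := F8aux_pow α hF
  have ha8 : α ∈ F8grp K := by
    rw [F8aux_mem]
    linear_combination α * ha7
  have hone := F8aux_one (K := K)
  have hcoef : ∀ c, (c = 1 ∨ c = α ∨ c = α + 1) → c ∈ F8grp K := by
    rintro c (rfl | rfl | rfl)
    · exact hone
    · exact ha8
    · exact add_mem ha8 hone
  have hu0 : u ≠ 0 := by rintro rfl; simp [hw2] at eu
  have hb8 : β ∈ F8grp K := by
    have : β = v * u⁻¹ := by rw [← huv, mul_inv_cancel_right₀ hu0]
    rw [this]
    exact F8aux_mul (hcoef v hv) (F8aux_inv (hcoef u hu))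
  have h3h := F8aux_dvd _ hcard α ha7 ha1
  have hWF : ∀ w ∈ W, ∃ c ∈ F8grp K, w = c * g := by
    intro w hw
    rcases (hW w).1 hw with h0 | h0 | h0 | h0
    · exact ⟨0, zero_mem _, by simpa⟩
    · exact ⟨1, hone, by simpa⟩
    · exact ⟨α, ha8, h0⟩
    · exact ⟨α + 1, add_mem ha8 hone, h0⟩
  have hJ : ∀ x, x ∈ S ⊓ smulSub α S ⊓ smulSub β S ⊓ smulSub (α + 1) S ⊓ smulSub (β + 1) S ↔
      ∀ y ∈ F8grp K, Tr (2 + k) (x * y * g) = 0 := by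
    intro x
    simp only [AddSubgroup.mem_inf, F8aux_mem_smulSub' _ ha0, F8aux_mem_smulSub' _ hb0,
      F8aux_mem_smulSub' _ hα1, F8aux_mem_smulSub' _ hβ1]
    constructor
    · rintro ⟨⟨⟨⟨H1, H2⟩, -⟩, -⟩, -⟩ y hy
      rw [hSmem2] at H1 H2
      obtain ⟨A, B⟩ := H1
      obtain ⟨C, -⟩ := H2
      have C' : Tr (2 + k) (α ^ 2 * g * x) = 0 := by
        rcases hF with h0 | h0
        · have e : α ^ 2 * g * x = g * (α⁻¹ * x) + g * x := by
            rw [inv_eq_of_mul_eq_one_right (b := α ^ 2 + 1) (by linear_combination h0 - h20)]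
            linear_combination -g * x * h20
          rw [e, F8aux_Tr_add, C, A, add_zero]
        · have e : α ^ 2 * g * x = g * (α⁻¹ * x) + α * g * x := by
            rw [inv_eq_of_mul_eq_one_right (b := α ^ 2 + α) (by linear_combination h0 - h20)]
            linear_combination -α * g * x * h20
          rw [e, F8aux_Tr_add, C, B, add_zero]
      rcases F8aux_F8 α y hF hy with rfl | rfl | rfl | rfl | rfl | rfl | rfl | rfl
      · simp [Tr0]
      · rw [← A]; congr 1; ring
      · rw [← B]; congr 1; ring
      · rw [show x * (α + 1) * g = α * g * x + g * x by ring, F8aux_Tr_add, A, B, add_zero]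
      · rw [← C']; congr 1; ring
      · rw [show x * (α ^ 2 + 1) * g = α ^ 2 * g * x + g * x by ring, F8aux_Tr_add, A, C',
          add_zero]
      · rw [show x * (α ^ 2 + α) * g = α ^ 2 * g * x + α * g * x by ring, F8aux_Tr_add, B, C',
          add_zero]
      · rw [show x * (α ^ 2 + α + 1) * g = α ^ 2 * g * x + α * g * x + g * x by ring,
          F8aux_Tr_add, F8aux_Tr_add, A, B, C', add_zero, add_zero]
    · intro H
      have key : ∀ a ∈ F8grp K, a⁻¹ * x ∈ S := by
        intro a ha
        rw [hSmem]
        intro w hw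
        obtain ⟨c, hc, rfl⟩ := hWF w hw
        rw [← H (c * a⁻¹) (F8aux_mul hc (F8aux_inv ha))]
        congr 1; ring
      exact ⟨⟨⟨⟨by simpa using key 1 hone, key _ ha8⟩, key _ hb8⟩, key _ (add_mem ha8 hone)⟩,
        key _ (add_mem hb8 hone)⟩
  refine ⟨h3h, ha8, hb8, ?_, ?_⟩
  · have hJp : S ⊓ smulSub α S ⊓ smulSub β S ⊓ smulSub (α + 1) S ⊓ smulSub (β + 1) S =
        perp (smulSub g (F8grp K)) := by
      ext x
      rw [hJ, hperp]
      constructor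
      · intro H z hz
        obtain ⟨y, hy, rfl⟩ := (F8aux_mem_smulSub _ _ _).1 hz
        rw [← H y hy]; congr 1; ring
      · intro H y hy
        rw [← H (g * y) ((F8aux_mem_smulSub _ _ _).2 ⟨y, hy, rfl⟩)]; congr 1; ring
    have hc8 : Nat.card (smulSub g (F8grp K)) = 8 := by
      rw [← F8aux_card α hF]
      exact AddSubgroup.card_map_of_injective (mul_right_injective₀ hg)
    have e := hpc (smulSub g (F8grp K))
    rw [hc8] at e
    rw [hJp]
    omega
  · intro γ hγ
    have hγ' : ∀ x, x ∈ S ⊔ smulSub α S ↔ Tr (2 + k) (γ * x) = 0 := by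
      intro x
      rw [← SetLike.mem_coe, hγ]
      rfl
    have hγW : γ ∈ W := by
      rw [hWdef, hperp]
      intro x hx
      rw [mul_comm]
      exact (hγ' x).1 (AddSubgroup.mem_sup_left hx)
    have hγ0 : γ ≠ 0 := by
      rintro rfl
      have : S ⊔ smulSub α S = ⊤ := by
        ext x
        simp [hγ', Tr0]
      rw [this, AddSubgroup.card_top, Nat.card_eq_fintype_card, hcard] at h1
      omega
    obtain ⟨c, hc, rfl⟩ := hWF γ hγW
    have hc0 : c ≠ 0 := by rintro rfl; simp at hγ0
    ext x
    rw [SetLike.mem_coe, hJ]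
    constructor
    · intro H y hy
      rw [← H (y * c) (F8aux_mul hy hc)]; congr 1; ring
    · intro H y hy
      rw [← H (y * c⁻¹) (F8aux_mul hy (F8aux_inv hc))]; congr 1; field_simp
end
end

section
/- Let q = 2^h with h ≥ 4, let S be a subgroup of (F_q,+) of order q/4, let α, β, α', β' ∈ F_q, and let W be a subset of F_q with |W| = q/4. Suppose that the point set A = {(0:1:w) : w ∈ W} ∪ {(1:0:s) : s ∈ S} ∪ {(1:1:1+s) : s ∈ S} ∪ {(1:α:α'+s) : s ∈ S} ∪ {(1:β:β'+s) : s ∈ S} is a KM-arc of type q/4 in PG(2,q). Then β = α + 1 and there exists μ ∈ F_q with S = {x ∈ F_q : Tr(μx) = 0 and Tr(αμx) = 0}. In particular the five q/4-secants of A are the lines X = 0, Y = 0, Y = X, Y = αX and Y = (α+1)X, whose slope set {0, 1, α, α+1} is an F_2-subspace of F_q; thus the q/4-secants of A form an F_2-linear pencil with head the line X = 0. -/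
open scoped Classical

noncomputable section

variable {K : Type*} [Field K]

lemma onLine_pt3 (a b c : K) (habc) (L : Submodule K (Fin 3 → K)) :
    OnLine (pt3 a b c habc) L ↔ ![a, b, c] ∈ L := by
  unfold OnLine pt3
  rw [Projectivization.submodule_mk, Submodule.span_singleton_le_iff_mem]

lemma pt3_inj1 (y z y' z' : K) (h1) (h2) : pt3 1 y z h1 = pt3 1 y' z' h2 ↔ y = y' ∧ z = z' := by
  unfold pt3
  rw [Projectivization.mk_eq_mk_iff']
  constructor
  · rintro ⟨c, hc⟩
    have e0 := congrFun hc 0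
    have e1 := congrFun hc 1
    have e2 := congrFun hc 2
    simp at e0 e1 e2
    subst e0
    simp at e1 e2
    exact ⟨e1.symm, e2.symm⟩
  · rintro ⟨rfl, rfl⟩
    exact ⟨1, by simp⟩

lemma pt3_inj0 (w w' : K) (h1) (h2) : pt3 0 1 w h1 = pt3 0 1 w' h2 ↔ w = w' := by
  unfold pt3
  rw [Projectivization.mk_eq_mk_iff']
  constructor
  · rintro ⟨c, hc⟩
    have e1 := congrFun hc 1
    have e2 := congrFun hc 2
    simp at e1 e2
    subst e1
    simpa using e2.symm
  · rintro rfl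
    exact ⟨1, by simp⟩

lemma pt3_ne01 (w y z : K) (h1) (h2) : pt3 0 1 w h1 ≠ pt3 1 y z h2 := by
  unfold pt3
  rw [Ne, Projectivization.mk_eq_mk_iff']
  rintro ⟨c, hc⟩
  have e0 := congrFun hc 0
  have e1 := congrFun hc 1
  simp at e0 e1
  subst e0
  simp at e1

lemma exists_line (L : Submodule K (Fin 3 → K)) (hL : IsLine L) :
    ∃ f0 f1 f2 : K, ¬ (f0 = 0 ∧ f1 = 0 ∧ f2 = 0) ∧
      ∀ v, v ∈ L ↔ f0 * v 0 + f1 * v 1 + f2 * v 2 = 0 := by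
  unfold IsLine at hL
  have hlt : L < ⊤ := by
    rw [lt_top_iff_ne_top]
    rintro rfl
    simp at hL
  obtain ⟨f, hf, hle⟩ := Submodule.exists_le_ker_of_lt_top L hlt
  have hfin := Module.Dual.finrank_ker_add_one_of_ne_zero (f := f) hf
  have heq : L = LinearMap.ker f := by
    apply Submodule.eq_of_le_of_finrank_eq hle
    simp at hfin
    omega
  have hfv : ∀ v, f v = f (Pi.single 0 1) * v 0 + f (Pi.single 1 1) * v 1
      + f (Pi.single 2 1) * v 2 := by
    intro v
    rw [LinearMap.pi_apply_eq_sum_univ f v, Fin.sum_univ_three]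
    simp only [smul_eq_mul]
    have : ∀ i : Fin 3, (fun j => if i = j then (1:K) else 0) = Pi.single i 1 := by
      intro i; ext j; simp [Pi.single_apply, eq_comm]
    rw [this, this, this]; ring
  refine ⟨f (Pi.single 0 1), f (Pi.single 1 1), f (Pi.single 2 1), ?_, ?_⟩
  · rintro ⟨h0, h1, h2⟩
    apply hf
    apply LinearMap.ext
    intro v
    rw [hfv, h0, h1, h2]
    simp
  · intro v
    rw [heq, LinearMap.mem_ker, hfv]

/-- The line `Z = aX + wY`. -/
def lineZ (a w : K) : Submodule K (Fin 3 → K) :=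
  LinearMap.ker ((LinearMap.proj 2 : (Fin 3 → K) →ₗ[K] K) - a • LinearMap.proj 0
    - w • LinearMap.proj 1)

lemma mem_lineZ (a w : K) (v : Fin 3 → K) : v ∈ lineZ a w ↔ v 2 = a * v 0 + w * v 1 := by
  simp only [lineZ, LinearMap.mem_ker, LinearMap.sub_apply, LinearMap.smul_apply,
    LinearMap.proj_apply, smul_eq_mul]
  rw [sub_sub, sub_eq_zero]

lemma mem_lineYaX (a : K) (v : Fin 3 → K) : v ∈ lineYaX a ↔ v 1 = a * v 0 := Iff.rfl

lemma mem_lineX0 (v : Fin 3 → K) : v ∈ lineX0 K ↔ v 0 = 0 := by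
  simp [lineX0]

lemma isLine_ker (f : (Fin 3 → K) →ₗ[K] K) (hf : f ≠ 0) : IsLine (LinearMap.ker f) := by
  unfold IsLine
  have hfin := Module.Dual.finrank_ker_add_one_of_ne_zero (f := f) hf
  simp at hfin
  omega

lemma isLine_lineZ (a w : K) : IsLine (lineZ a w) := by
  apply isLine_ker
  intro h
  have := LinearMap.congr_fun h ![0, 0, 1]
  simp at this

lemma isLine_lineX0 : IsLine (lineX0 K) := by
  apply isLine_ker
  intro h
  have := LinearMap.congr_fun h ![1, 0, 0]
  simp at this

lemma isLine_lineYaX (a : K) : IsLine (lineYaX a) := by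
  have : lineYaX a = LinearMap.ker ((LinearMap.proj 1 : (Fin 3 → K) →ₗ[K] K)
      - a • LinearMap.proj 0) := by
    ext v
    rw [mem_lineYaX, LinearMap.mem_ker]
    simp [sub_eq_zero]
  rw [this]
  apply isLine_ker
  intro h
  have := LinearMap.congr_fun h ![0, 1, 0]
  simp at this

lemma line_cases (L : Submodule K (Fin 3 → K)) (hL : IsLine L) :
    L = lineX0 K ∨ (∃ a, L = lineYaX a) ∨ ∃ a w, L = lineZ a w := by
  obtain ⟨f0, f1, f2, hne, hm⟩ := exists_line L hL
  by_cases h2 : f2 = 0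
  · by_cases h1 : f1 = 0
    · left
      have h0 : f0 ≠ 0 := fun h0 => hne ⟨h0, h1, h2⟩
      ext v
      rw [hm, mem_lineX0]
      simp [h1, h2, h0]
    · right; left
      refine ⟨-f0 / f1, ?_⟩
      ext v
      rw [hm, mem_lineYaX, h2]
      field_simp
      constructor <;> intro h <;> linear_combination h
  · right; right
    refine ⟨-f0 / f2, -f1 / f2, ?_⟩
    ext v
    rw [hm, mem_lineZ]
    field_simp
    constructor <;> intro h <;> linear_combination h

/-- Combinatorial description of the arc. -/
structure ArcData (S : AddSubgroup K) (W : Set K) (α β α' β' : K) (A : Set (Pt K)) : Prop where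
  mem : ∀ P, P ∈ A ↔ (∃ w ∈ W, P = pt3 0 1 w (by simp)) ∨
    ∃ y z, P = pt3 1 y z (by simp) ∧ ((y = 0 ∧ z ∈ S) ∨ (y = 1 ∧ z - 1 ∈ S) ∨
      (y = α ∧ z - α' ∈ S) ∨ (y = β ∧ z - β' ∈ S))

section
variable {S : AddSubgroup K} {W : Set K} {α β α' β' : K} {A : Set (Pt K)}

lemma ArcData.mem0 (hd : ArcData S W α β α' β' A) (w : K) (h0) : pt3 0 1 w h0 ∈ A ↔ w ∈ W := by
  rw [hd.mem]
  simp [pt3_inj0, pt3_ne01]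

lemma ArcData.mem1 (hd : ArcData S W α β α' β' A) (y z : K) (h0) : pt3 1 y z h0 ∈ A ↔
    ((y = 0 ∧ z ∈ S) ∨ (y = 1 ∧ z - 1 ∈ S) ∨
      (y = α ∧ z - α' ∈ S) ∨ (y = β ∧ z - β' ∈ S)) := by
  rw [hd.mem]
  simp only [(pt3_ne01 _ _ _ _ _).symm, and_false, exists_false, false_or, pt3_inj1]
  constructor
  · rintro ⟨y', z', ⟨rfl, rfl⟩, h⟩; exact h
  · intro h; exact ⟨y, z, ⟨rfl, rfl⟩, h⟩

lemma ArcData.secX0 (hd : ArcData S W α β α' β' A) : secantCount A (lineX0 K) = W.ncard := by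
  unfold secantCount
  rw [← Set.ncard_image_of_injective W (f := fun w => pt3 0 1 w (by simp))
    (fun a b hab => (pt3_inj0 _ _ _ _).1 hab)]
  congr 1
  ext P
  simp only [Set.mem_ofPred_eq, Set.mem_image]
  constructor
  · rintro ⟨hP, hL⟩
    rcases (hd.mem P).1 hP with ⟨w, hw, rfl⟩ | ⟨y, z, rfl, -⟩
    · exact ⟨w, hw, rfl⟩
    · rw [onLine_pt3, mem_lineX0] at hL
      simp at hL
  · rintro ⟨w, hw, rfl⟩
    refine ⟨(hd.mem0 _ _).2 hw, ?_⟩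
    rw [onLine_pt3, mem_lineX0]; simp

lemma ArcData.secYaX (hd : ArcData S W α β α' β' A) (y : K) :
    secantCount A (lineYaX y) = {z : K | (y = 0 ∧ z ∈ S) ∨ (y = 1 ∧ z - 1 ∈ S) ∨
      (y = α ∧ z - α' ∈ S) ∨ (y = β ∧ z - β' ∈ S)}.ncard := by
  unfold secantCount
  rw [← Set.ncard_image_of_injective {z : K | _} (f := fun z => pt3 1 y z (by simp))
    (fun a b hab => ((pt3_inj1 _ _ _ _ _ _).1 hab).2)]
  congr 1
  ext P
  simp only [Set.mem_ofPred_eq, Set.mem_image]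
  constructor
  · rintro ⟨hP, hL⟩
    rcases (hd.mem P).1 hP with ⟨w, hw, rfl⟩ | ⟨y', z, rfl, h⟩
    · rw [onLine_pt3, mem_lineYaX] at hL
      simp at hL
    · rw [onLine_pt3, mem_lineYaX] at hL
      simp at hL
      subst hL
      exact ⟨z, h, rfl⟩
  · rintro ⟨z, hz, rfl⟩
    refine ⟨(hd.mem1 _ _ _).2 hz, ?_⟩
    rw [onLine_pt3, mem_lineYaX]; simp

/-- Number of arc points on the line `Z = aX + wY`. -/
def cnt (S : AddSubgroup K) (W : Set K) (α β α' β' a w : K) : ℕ :=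
  (if w ∈ W then 1 else 0) + (if a ∈ S then 1 else 0) + (if a + w - 1 ∈ S then 1 else 0)
    + (if a + w * α - α' ∈ S then 1 else 0) + (if a + w * β - β' ∈ S then 1 else 0)

lemma ArcData.secZ [Finite K] (hd : ArcData S W α β α' β' A)
    (ha0 : α ≠ 0) (ha1 : α ≠ 1) (hb0 : β ≠ 0) (hb1 : β ≠ 1) (hab : α ≠ β) (a w : K) :
    secantCount A (lineZ a w) = cnt S W α β α' β' a w := by
  have hfin : Finite (Pt K) := inferInstance
  unfold secantCount
  have hset : {P ∈ A | OnLine P (lineZ a w)} =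
      {P | P = pt3 0 1 w (by simp) ∧ w ∈ W} ∪
      ({P | P = pt3 1 0 a (by simp) ∧ a ∈ S} ∪
      ({P | P = pt3 1 1 (a + w) (by simp) ∧ a + w - 1 ∈ S} ∪
      ({P | P = pt3 1 α (a + w * α) (by simp) ∧ a + w * α - α' ∈ S} ∪
      {P | P = pt3 1 β (a + w * β) (by simp) ∧ a + w * β - β' ∈ S}))) := by
    ext P
    simp only [Set.mem_ofPred_eq, Set.mem_union]
    constructor
    · rintro ⟨hP, hL⟩
      rcases (hd.mem P).1 hP with ⟨w', hw, rfl⟩ | ⟨y', z, rfl, h⟩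
      · rw [onLine_pt3, mem_lineZ] at hL
        simp at hL
        subst hL
        exact Or.inl ⟨rfl, hw⟩
      · rw [onLine_pt3, mem_lineZ] at hL
        simp at hL
        subst hL
        right
        rcases h with ⟨rfl, h⟩ | ⟨rfl, h⟩ | ⟨rfl, h⟩ | ⟨rfl, h⟩
        · left; simpa using h
        · right; left; simpa using h
        · right; right; left; exact ⟨rfl, h⟩
        · right; right; right; exact ⟨rfl, h⟩
    · rintro (⟨rfl, h⟩ | ⟨rfl, h⟩ | ⟨rfl, h⟩ | ⟨rfl, h⟩ | ⟨rfl, h⟩) <;>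
        simp [hd.mem0, hd.mem1, h, onLine_pt3, mem_lineZ]
  have key : ∀ (Q : Pt K) (p : Prop), {P | P = Q ∧ p}.ncard = if p then 1 else 0 := by
    intro Q p
    split_ifs with hp <;> simp [hp]
  have hdis : ∀ s t : Set (Pt K), Disjoint s t → (s ∪ t).ncard = s.ncard + t.ncard :=
    fun s t h => Set.ncard_union_eq h (Set.toFinite _) (Set.toFinite _)
  rw [hset, hdis, hdis, hdis, hdis]
  · simp only [key, cnt]; ring
  all_goals
    rw [Set.disjoint_left]
    rintro P ⟨rfl, -⟩
    simp [pt3_inj1, pt3_ne01, ha0, ha1, hb0, hb1, hab, ha0.symm, ha1.symm, hb0.symm, hb1.symm]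

end
section
variable {S : AddSubgroup K} {W : Set K} {α β α' β' : K}

lemma card_mem [Fintype K] (W : Set K) :
    ∑ x : K, (if x ∈ W then 1 else 0 : ℕ) = W.ncard := by
  rw [Finset.sum_boole, Set.ncard_eq_toFinset_card']
  simp [Set.toFinset]

lemma card_affine [Fintype K] (S : AddSubgroup K) (c d : K) (hc : c ≠ 0) :
    ∑ x : K, (if c * x + d ∈ S then 1 else 0 : ℕ) = Nat.card S := by
  have e : Function.Bijective (fun x : K => c * x + d) := by
    apply Finite.injective_iff_bijective.1
    intro x y hxy
    simpa [hc] using hxy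
  rw [Function.Bijective.sum_comp e (fun x => if x ∈ S then 1 else 0)]
  exact card_mem (S : Set K)

lemma cnt_eq_zero_or_two [Fintype K] (t : ℕ) (ht : 4 ≤ t) (hq : Fintype.card K = 4 * t)
    (hS : Nat.card S = t) (hW : W.ncard = t) (ha0 : α ≠ 0) (hb0 : β ≠ 0)
    (hc : ∀ a w, cnt S W α β α' β' a w = 0 ∨ cnt S W α β α' β' a w = 2 ∨
      cnt S W α β α' β' a w = t) (a w : K) :
    cnt S W α β α' β' a w = 0 ∨ cnt S W α β α' β' a w = 2 := by
  have sat : ∀ f : K → ℕ, (∀ x, 2 ≤ f x) → ∑ x, f x = 2 * (4 * t) → ∀ x, f x = 2 := by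
    intro f hf hs x
    have h2 : ∑ x : K, 2 = ∑ x, f x := by
      rw [hs]; simp [hq]; ring
    exact ((Finset.sum_eq_sum_iff_of_le (fun i _ => hf i)).1 h2 x (Finset.mem_univ _)).symm
  by_cases hw : w ∈ W
  · right
    refine sat (fun a => cnt S W α β α' β' a w) ?_ ?_ a
    · intro x
      have h1 := hc x w
      have : 1 ≤ cnt S W α β α' β' x w := by
        unfold cnt; rw [if_pos hw]; omega
      omega
    · unfold cnt
      simp only [Finset.sum_add_distrib]
      have e1 := card_affine S 1 0 one_ne_zero
      have e2 := card_affine S 1 (w - 1) one_ne_zero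
      have e3 := card_affine S 1 (w * α - α') one_ne_zero
      have e4 := card_affine S 1 (w * β - β') one_ne_zero
      simp only [one_mul, add_zero, ← add_sub_assoc] at e1 e2 e3 e4
      rw [e1, e2, e3, e4, hS]
      simp [hw, hq]; ring
  · by_cases ha : a ∈ S
    · right
      refine sat (fun w => cnt S W α β α' β' a w) ?_ ?_ w
      · intro x
        have h1 := hc a x
        have : 1 ≤ cnt S W α β α' β' a x := by
          unfold cnt; rw [if_pos ha]; omega
        omega
      · unfold cnt
        simp only [Finset.sum_add_distrib]
        have e1 := card_mem W
        have e2 := card_affine S 1 (a - 1) one_ne_zero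
        have e3 := card_affine S α (a - α') ha0
        have e4 := card_affine S β (a - β') hb0
        have r2 : ∀ x : K, 1 * x + (a - 1) = a + x - 1 := fun x => by ring
        have r3 : ∀ x : K, α * x + (a - α') = a + x * α - α' := fun x => by ring
        have r4 : ∀ x : K, β * x + (a - β') = a + x * β - β' := fun x => by ring
        simp only [r2, r3, r4] at e2 e3 e4
        rw [e1, e2, e3, e4, hS]
        simp [ha, hq, hW]; ring
    · have h1 := hc a w
      have : cnt S W α β α' β' a w ≤ 3 := by
        unfold cnt
        rw [if_neg ha, if_neg hw]
        split_ifs <;> omega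
      omega

lemma sum_mem_of_count [CharP K 2] (S : AddSubgroup K) (c : ℕ) (e1 e2 e3 : K) 
    (h : ∀ a, c + (if a ∈ S then 1 else 0) + (if a + e1 ∈ S then 1 else 0)
    + (if a + e2 ∈ S then 1 else 0) + (if a + e3 ∈ S then 1 else 0) = 0 ∨ 
     c + (if a ∈ S then 1 else 0) + (if a + e1 ∈ S then 1 else 0)
    + (if a + e2 ∈ S then 1 else 0) + (if a + e3 ∈ S then 1 else 0) = 2) :
    e1 + e2 + e3 ∈ S ∧ ¬ (e1 ∈ S ∧ e2 ∈ S) := by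
  have h0 := h 0
  have h1 := h e1
  have h2 := h e2
  have h12 := h (e1 + e2)
  have r1 : e1 + e2 + e1 = e2 := by rw [add_comm e1 e2, add_assoc, CharTwo.add_self_eq_zero, add_zero]
  have r2 : e1 + e2 + e2 = e1 := by rw [add_assoc, CharTwo.add_self_eq_zero, add_zero]
  rw [r1, r2] at h12
  rw [CharTwo.add_self_eq_zero] at h1 h2
  rw [add_comm e2 e1] at h2
  simp only [zero_add, S.zero_mem, if_true] at h0 h1 h2
  have k1 : e1 ∈ S → (e1 + e2 + e3 ∈ S ↔ e2 + e3 ∈ S) := by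
    intro k; rw [add_assoc]; exact S.add_mem_cancel_left k
  have k2 : e2 ∈ S → (e1 + e2 + e3 ∈ S ↔ e1 + e3 ∈ S) := by
    intro k; rw [add_right_comm]; exact S.add_mem_cancel_right k
  have k3 : e3 ∈ S → (e1 + e2 + e3 ∈ S ↔ e1 + e2 ∈ S) := by
    intro k; exact S.add_mem_cancel_right k
  have k12 : e1 ∈ S → (e1 + e2 ∈ S ↔ e2 ∈ S) := S.add_mem_cancel_left
  have k21 : e2 ∈ S → (e1 + e2 ∈ S ↔ e1 ∈ S) := S.add_mem_cancel_right
  have k13 : e1 ∈ S → (e1 + e3 ∈ S ↔ e3 ∈ S) := S.add_mem_cancel_left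
  have k31 : e3 ∈ S → (e1 + e3 ∈ S ↔ e1 ∈ S) := S.add_mem_cancel_right
  clear h
  by_cases q1 : e1 ∈ S <;> by_cases q2 : e2 ∈ S <;> by_cases q3 : e3 ∈ S <;>
  by_cases q12 : e1 + e2 ∈ S <;> by_cases q13 : e1 + e3 ∈ S <;> by_cases q23 : e2 + e3 ∈ S <;>
  by_cases q : e1 + e2 + e3 ∈ S <;>
    simp [q1, q2, q3, q12, q13, q23, q] at * <;> omega

end

lemma trace_eq [Fintype K] [Algebra (ZMod 2) K] (h : ℕ) (hcard : Fintype.card K = 2 ^ h) (x : K) :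
    Tr h x = 0 ↔ Algebra.trace (ZMod 2) K x = 0 := by
  have hr : Module.finrank (ZMod 2) K = h := by
    have := Module.card_eq_pow_finrank (K := ZMod 2) (V := K)
    rw [hcard, ZMod.card] at this
    exact (Nat.pow_right_injective (le_refl 2) this).symm
  have := FiniteField.algebraMap_trace_eq_sum_pow (ZMod 2) K x
  rw [hr, Nat.card_zmod] at this
  unfold Tr
  rw [← this]
  simp

lemma trace_part [Fintype K] [CharP K 2] (h : ℕ) (hcard : Fintype.card K = 2 ^ h)
    (S : AddSubgroup K) (hS : Nat.card S = 2 ^ h / 4) (α c d : K) (ha0 : α ≠ 0) (ha1 : α ≠ 1)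
    (hno : ∀ w, ¬ (w - c ∈ S ∧ α * w - d ∈ S)) :
    ∃ μ : K, (S : Set K) = {x : K | Tr h (μ * x) = 0 ∧ Tr h (α * μ * x) = 0} := by
  let _ : Algebra (ZMod 2) K := ZMod.algebra K 2
  have hnd := traceForm_nondegenerate (ZMod 2) K
  let S' : Submodule (ZMod 2) K := AddSubgroup.toZModSubmodule 2 S
  have hS' : ∀ x, x ∈ S' ↔ x ∈ S := fun x => Iff.rfl
  let F : K →ₗ[ZMod 2] (K ⧸ S') × (K ⧸ S') :=
    S'.mkQ.prod (S'.mkQ ∘ₗ LinearMap.mulLeft (ZMod 2) α)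
  have hF : LinearMap.range F < ⊤ := by
    rw [lt_top_iff_ne_top]
    intro htop
    have hm : (S'.mkQ c, S'.mkQ d) ∈ LinearMap.range F := by rw [htop]; trivial
    obtain ⟨w, hw⟩ := hm
    have hw1 : S'.mkQ w = S'.mkQ c := congrArg Prod.fst hw
    have hw2 : S'.mkQ (α * w) = S'.mkQ d := congrArg Prod.snd hw
    rw [Submodule.mkQ_apply, Submodule.mkQ_apply, Submodule.Quotient.eq, hS'] at hw1 hw2
    exact hno w ⟨hw1, hw2⟩
  obtain ⟨l, hl, hle⟩ := Submodule.exists_le_ker_of_lt_top _ hF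
  let f : K →ₗ[ZMod 2] ZMod 2 := l ∘ₗ LinearMap.inl _ _ _ ∘ₗ S'.mkQ
  let g : K →ₗ[ZMod 2] ZMod 2 := l ∘ₗ LinearMap.inr _ _ _ ∘ₗ S'.mkQ
  have hfg : ∀ w, f w + g (α * w) = 0 := by
    intro w
    have h1 : l (F w) = 0 := hle ⟨w, rfl⟩
    rw [← h1]
    simp only [f, g, F, LinearMap.comp_apply, ← map_add]
    simp [Function.prod]
  have hfS : ∀ x ∈ S, f x = 0 := by
    intro x hx
    have : S'.mkQ x = 0 := (Submodule.Quotient.mk_eq_zero _).2 hx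
    simp only [f, LinearMap.comp_apply, this, map_zero]
  have hgS : ∀ x ∈ S, g x = 0 := by
    intro x hx
    have : S'.mkQ x = 0 := (Submodule.Quotient.mk_eq_zero _).2 hx
    simp only [g, LinearMap.comp_apply, this, map_zero]
  have hg0 : g ≠ 0 := by
    intro hg
    have hf : ∀ w, f w = 0 := fun w => by simpa [hg] using hfg w
    apply hl
    apply LinearMap.ext
    rintro ⟨u, v⟩
    obtain ⟨u, rfl⟩ := S'.mkQ_surjective u
    obtain ⟨v, rfl⟩ := S'.mkQ_surjective v
    have e : (S'.mkQ u, S'.mkQ v) = LinearMap.inl (ZMod 2) _ _ (S'.mkQ u)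
      + LinearMap.inr (ZMod 2) _ _ (S'.mkQ v) := by simp
    rw [e, map_add]
    have h1 := hf u
    have h2 : g v = 0 := by rw [hg]; rfl
    simp only [f, g, LinearMap.comp_apply] at h1 h2
    rw [h1, h2]; simp
  obtain ⟨μ, hμ⟩ := (LinearMap.BilinForm.toDual (Algebra.traceForm (ZMod 2) K) hnd).surjective g
  have hgμ : ∀ x, g x = Algebra.trace (ZMod 2) K (μ * x) := by
    intro x
    rw [← hμ, LinearMap.BilinForm.toDual_def, Algebra.traceForm_apply]
  have hfμ : ∀ x, f x = Algebra.trace (ZMod 2) K (α * μ * x) := by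
    intro x
    rw [mul_assoc, mul_left_comm, ← hgμ]
    have := hfg x
    exact CharTwo.add_eq_zero.1 this
  have hμ0 : μ ≠ 0 := by
    rintro rfl
    apply hg0
    ext x
    rw [hgμ]; simp
  let G : K →ₗ[ZMod 2] ZMod 2 × ZMod 2 := g.prod f
  have hG : LinearMap.range G = ⊤ := by
    by_contra hne
    obtain ⟨m, hm, hml⟩ := Submodule.exists_le_ker_of_lt_top _ (lt_top_iff_ne_top.2 hne)
    have hm1 : ∀ x, Algebra.trace (ZMod 2) K
        (((algebraMap (ZMod 2) K (m (1, 0)) + algebraMap (ZMod 2) K (m (0, 1)) * α) * μ) * x)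
          = 0 := by
      intro x
      have h1 : m (G x) = 0 := hml ⟨x, rfl⟩
      have e : G x = g x • ((1 : ZMod 2), (0 : ZMod 2)) + f x • ((0 : ZMod 2), (1 : ZMod 2)) := by
        simp [G, Function.prod]
      rw [e, map_add, map_smul, map_smul, hgμ, hfμ] at h1
      have r : ((algebraMap (ZMod 2) K (m (1, 0)) + algebraMap (ZMod 2) K (m (0, 1)) * α) * μ) * x
          = m (1, 0) • (μ * x) + m (0, 1) • (α * μ * x) := by
        rw [Algebra.smul_def, Algebra.smul_def]; ring
      rw [r, map_add, map_smul, map_smul]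
      simp only [smul_eq_mul] at h1 ⊢
      rw [mul_comm, mul_comm (m (0, 1)), h1]
    have hz : (algebraMap (ZMod 2) K (m (1, 0)) + algebraMap (ZMod 2) K (m (0, 1)) * α) * μ = 0 := by
      apply (LinearMap.BilinForm.toDual (Algebra.traceForm (ZMod 2) K) hnd).injective
      ext x
      rw [LinearMap.BilinForm.toDual_def, Algebra.traceForm_apply, hm1]
      simp
    have hz2 := (mul_eq_zero.1 hz).resolve_right hμ0
    have hab : m (1, 0) = 0 ∧ m (0, 1) = 0 := by
      have two : ∀ x : ZMod 2, x = 0 ∨ x = 1 := by decide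
      rcases two (m (1, 0)) with h1 | h1 <;> rcases two (m (0, 1)) with h2 | h2 <;>
        rw [h1, h2] at hz2 <;> simp at hz2
      · exact ⟨h1, h2⟩
      · exact absurd hz2 ha0
      · exact absurd (CharTwo.add_eq_zero.1 hz2).symm ha1
    apply hm
    apply LinearMap.ext
    rintro ⟨u, v⟩
    have e : ((u, v) : ZMod 2 × ZMod 2) = u • ((1 : ZMod 2), (0 : ZMod 2))
      + v • ((0 : ZMod 2), (1 : ZMod 2)) := by simp
    rw [e, map_add, map_smul, map_smul, hab.1, hab.2]; simp
  have hcG : Nat.card G.toAddMonoidHom.ker = 2 ^ h / 4 := by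
    have h1 := AddSubgroup.card_mul_index G.toAddMonoidHom.ker
    have hsurj : Function.Surjective G.toAddMonoidHom := LinearMap.range_eq_top.1 hG
    rw [AddSubgroup.index_ker, AddMonoidHom.range_eq_top.2 hsurj, AddSubgroup.card_top,
      Nat.card_prod, Nat.card_zmod, Nat.card_eq_fintype_card (α := K), hcard] at h1
    omega
  have hle2 : S ≤ G.toAddMonoidHom.ker := by
    intro x hx
    rw [AddMonoidHom.mem_ker]
    change (g x, f x) = 0
    rw [hfS x hx, hgS x hx]; rfl
  have heq := AddSubgroup.eq_of_le_of_card_ge hle2 (by rw [hcG, hS])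
  refine ⟨μ, ?_⟩
  ext x
  rw [Set.mem_ofPred_eq, trace_eq h hcard, trace_eq h hcard, ← hgμ, ← hfμ, heq]
  change (g x, f x) = 0 ↔ _
  rw [Prod.mk_eq_zero]

lemma ncard_shift [Fintype K] (S : AddSubgroup K) (d : K) :
    {z : K | z - d ∈ S}.ncard = Nat.card S := by
  rw [← card_affine S 1 (-d) one_ne_zero, ← card_mem]
  simp [sub_eq_add_neg]

lemma ncard_piece [Finite K] (S : AddSubgroup K) (y z : K) :
    {P : Pt K | ∃ s ∈ S, P = pt3 1 y (z + s) (by simp)}.ncard ≤ Nat.card S := by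
  have : {P : Pt K | ∃ s ∈ S, P = pt3 1 y (z + s) (by simp)} =
      (fun s => pt3 1 y (z + s) (by simp)) '' (S : Set K) := by
    ext P
    simp [eq_comm]
  rw [this]
  exact Set.ncard_image_le (Set.toFinite _)

lemma ne_of_pieces [Finite K] (t : ℕ) (ht : 4 ≤ t) (S : AddSubgroup K) (A P1 P2 P3 : Set (Pt K))
    (y1 z1 y2 z2 : K) (hA : IsKMArc (4 * t) t A)
    (heq : A = (P1 ∪ P2 ∪ P3) ∪ ({P : Pt K | ∃ s ∈ S, P = pt3 1 y1 (z1 + s) (by simp)}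
      ∪ {P : Pt K | ∃ s ∈ S, P = pt3 1 y2 (z2 + s) (by simp)}))
    (h1 : P1.ncard ≤ t) (h2 : P2.ncard ≤ t) (h3 : P3.ncard ≤ t) : y1 ≠ y2 := by
  rintro rfl
  obtain ⟨hc, hl⟩ := hA
  have hfin : Finite (Pt K) := inferInstance
  have hl1 := hl (lineYaX y1) (isLine_lineYaX y1)
  have hsub : ({P : Pt K | ∃ s ∈ S, P = pt3 1 y1 (z1 + s) (by simp)}
      ∪ {P : Pt K | ∃ s ∈ S, P = pt3 1 y1 (z2 + s) (by simp)}) ⊆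
      {P ∈ A | OnLine P (lineYaX y1)} := by
    intro P hP
    refine ⟨by rw [heq]; exact Or.inr hP, ?_⟩
    rcases hP with ⟨s, -, rfl⟩ | ⟨s, -, rfl⟩ <;> rw [onLine_pt3, mem_lineYaX] <;> simp
  have hle := Set.ncard_le_ncard hsub (Set.toFinite _)
  have u1 := Set.ncard_union_le (P1 ∪ P2 ∪ P3)
    ({P : Pt K | ∃ s ∈ S, P = pt3 1 y1 (z1 + s) (by simp)}
      ∪ {P : Pt K | ∃ s ∈ S, P = pt3 1 y1 (z2 + s) (by simp)})
  have u2 := Set.ncard_union_le (P1 ∪ P2) P3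
  have u3 := Set.ncard_union_le P1 P2
  rw [← heq] at u1
  unfold secantCount at hl1
  omega

/-- Theorem 3.10: if the displayed point set is a KM-arc of type `q/4`,
then `β = α + 1`, `S` is cut out by the traces `μ`, `αμ`, the `q/4`-secants are exactly
`X = 0` and `Y = aX` for `a ∈ {0, 1, α, α+1}`, and this slope set is closed under
addition (an `F₂`-subspace): the `q/4`-secants form an `F₂`-linear pencil with head
the line `X = 0`. -/
theorem elation_q4_linear_pencil
    {K : Type*} [Field K] [Fintype K] (h : ℕ) (hh : 4 ≤ h)
    (hcard : Fintype.card K = 2 ^ h)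
    (S : AddSubgroup K) (hS : Nat.card S = 2 ^ h / 4)
    (α β α' β' : K) (W : Set K) (hW : W.ncard = 2 ^ h / 4)
    (A : Set (Pt K))
    (hAdef : A = {P | ∃ w ∈ W, P = pt3 0 1 w (by simp)}
      ∪ {P | ∃ s ∈ S, P = pt3 1 0 s (by simp)}
      ∪ {P | ∃ s ∈ S, P = pt3 1 1 (1 + s) (by simp)}
      ∪ {P | ∃ s ∈ S, P = pt3 1 α (α' + s) (by simp)}
      ∪ {P | ∃ s ∈ S, P = pt3 1 β (β' + s) (by simp)})
    (hA : IsKMArc (2 ^ h) (2 ^ h / 4) A) :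
    β = α + 1 ∧
    (∃ μ : K, (S : Set K) = {x : K | Tr h (μ * x) = 0 ∧ Tr h (α * μ * x) = 0}) ∧
    (∀ L : Submodule K (Fin 3 → K), IsLine L →
      (secantCount A L = 2 ^ h / 4 ↔
        L = lineX0 K ∨ ∃ a : K, (a = 0 ∨ a = 1 ∨ a = α ∨ a = α + 1) ∧ L = lineYaX a)) ∧
    (∀ a b : K, (a = 0 ∨ a = 1 ∨ a = α ∨ a = α + 1) →
      (b = 0 ∨ b = 1 ∨ b = α ∨ b = α + 1) →
      (a + b = 0 ∨ a + b = 1 ∨ a + b = α ∨ a + b = α + 1)) := by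
  have hchar : CharP K 2 := charP_of_card_eq_prime_pow hcard
  have hpow : 2 ^ h = 4 * 2 ^ (h - 2) := by
    obtain ⟨k, rfl⟩ := Nat.exists_eq_add_of_le hh
    rw [show 4 + k - 2 = k + 2 by omega]
    ring
  obtain ⟨t, ht⟩ : ∃ t, t = 2 ^ h / 4 := ⟨_, rfl⟩
  have htq : 2 ^ h = 4 * t := by omega
  have ht4 : 4 ≤ t := by
    have : 2 ^ 4 ≤ 2 ^ h := Nat.pow_le_pow_right (by norm_num) hh
    omega
  have hA' := hA
  rw [← ht] at hS hW hA' ⊢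
  rw [htq] at hA'
  have hq : Fintype.card K = 4 * t := by rw [hcard, htq]
  have hp0 : {P : Pt K | ∃ w ∈ W, P = pt3 0 1 w (by simp)}.ncard ≤ t := by
    have : {P : Pt K | ∃ w ∈ W, P = pt3 0 1 w (by simp)} =
        (fun w => pt3 0 1 w (by simp)) '' W := by
      ext P
      simp [eq_comm]
    rw [this, ← hW]
    exact Set.ncard_image_le (Set.toFinite _)
  have hp : ∀ y z : K, {P : Pt K | ∃ s ∈ S, P = pt3 1 y (z + s) (by simp)}.ncard ≤ t :=
    fun y z => by rw [← hS]; exact ncard_piece S y z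
  have hAd : A = {P | ∃ w ∈ W, P = pt3 0 1 w (by simp)}
      ∪ {P | ∃ s ∈ S, P = pt3 1 0 (0 + s) (by simp)}
      ∪ {P | ∃ s ∈ S, P = pt3 1 1 (1 + s) (by simp)}
      ∪ {P | ∃ s ∈ S, P = pt3 1 α (α' + s) (by simp)}
      ∪ {P | ∃ s ∈ S, P = pt3 1 β (β' + s) (by simp)} := by
    rw [hAdef]; simp only [zero_add]
  have ha0 : α ≠ 0 := by
    refine ne_of_pieces t ht4 S A _ _ _ α α' 0 0 hA' ?_ hp0 (hp 1 1) (hp β β')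
    rw [hAd]; ac_rfl
  have ha1 : α ≠ 1 := by
    refine ne_of_pieces t ht4 S A _ _ _ α α' 1 1 hA' ?_ hp0 (hp 0 0) (hp β β')
    rw [hAd]; ac_rfl
  have hb0 : β ≠ 0 := by
    refine ne_of_pieces t ht4 S A _ _ _ β β' 0 0 hA' ?_ hp0 (hp 1 1) (hp α α')
    rw [hAd]; ac_rfl
  have hb1 : β ≠ 1 := by
    refine ne_of_pieces t ht4 S A _ _ _ β β' 1 1 hA' ?_ hp0 (hp 0 0) (hp α α')
    rw [hAd]; ac_rfl
  have hab : α ≠ β := by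
    refine ne_of_pieces t ht4 S A _ _ _ α α' β β' hA' ?_ hp0 (hp 0 0) (hp 1 1)
    rw [hAd]; ac_rfl
  have hd : ArcData S W α β α' β' A := by
    constructor
    intro P
    rw [hAdef]
    simp only [Set.mem_union, Set.mem_ofPred_eq]
    constructor
    · rintro ((((⟨w, hw, rfl⟩ | ⟨s, hs, rfl⟩) | ⟨s, hs, rfl⟩) | ⟨s, hs, rfl⟩) | ⟨s, hs, rfl⟩)
      · exact Or.inl ⟨w, hw, rfl⟩
      · exact Or.inr ⟨_, _, rfl, Or.inl ⟨rfl, hs⟩⟩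
      · exact Or.inr ⟨_, _, rfl, Or.inr (Or.inl ⟨rfl, by simpa using hs⟩)⟩
      · exact Or.inr ⟨_, _, rfl, Or.inr (Or.inr (Or.inl ⟨rfl, by simpa using hs⟩))⟩
      · exact Or.inr ⟨_, _, rfl, Or.inr (Or.inr (Or.inr ⟨rfl, by simpa using hs⟩))⟩
    · rintro (⟨w, hw, rfl⟩ | ⟨y, z, rfl, ⟨rfl, h1⟩ | ⟨rfl, h1⟩ | ⟨rfl, h1⟩ | ⟨rfl, h1⟩⟩)
      · exact Or.inl (Or.inl (Or.inl (Or.inl ⟨w, hw, rfl⟩)))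
      · exact Or.inl (Or.inl (Or.inl (Or.inr ⟨z, h1, rfl⟩)))
      · exact Or.inl (Or.inl (Or.inr ⟨z - 1, h1, by simp⟩))
      · exact Or.inl (Or.inr ⟨z - α', h1, by simp⟩)
      · exact Or.inr ⟨z - β', h1, by simp⟩
  have hcnt : ∀ a w, cnt S W α β α' β' a w = 0 ∨ cnt S W α β α' β' a w = 2 := by
    apply cnt_eq_zero_or_two t ht4 hq hS hW ha0 hb0
    intro a w
    rw [← hd.secZ ha0 ha1 hb0 hb1 hab]
    exact hA'.2 _ (isLine_lineZ a w)
  have hmain : ∀ w, (w - 1) + (w * α - α') + (w * β - β') ∈ S ∧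
      ¬ (w - 1 ∈ S ∧ w * α - α' ∈ S) := by
    intro w
    apply sum_mem_of_count S (if w ∈ W then 1 else 0)
    intro a
    have := hcnt a w
    unfold cnt at this
    simpa only [add_sub_assoc] using this
  have hβ : β = α + 1 := by
    by_contra hne
    have hk : 1 + α + β ≠ 0 := by
      intro h0
      apply hne
      rw [add_comm α 1]
      exact (CharTwo.add_eq_zero.1 h0).symm
    have hall : ∀ x, x ∈ S := by
      intro x
      have h1 := S.sub_mem (hmain (x / (1 + α + β))).1 (hmain 0).1
      have e : x / (1 + α + β) - 1 + (x / (1 + α + β) * α - α') + (x / (1 + α + β) * β - β')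
        - (0 - 1 + (0 * α - α') + (0 * β - β')) = x := by
        field_simp
        ring
      rwa [e] at h1
    have htop : S = ⊤ := by
      ext x; simp [hall x]
    rw [htop, AddSubgroup.card_top, Nat.card_eq_fintype_card, hq] at hS
    omega
  refine ⟨hβ, ?_, ?_, ?_⟩
  · apply trace_part h hcard S (by rw [hS, ht]) α 1 α' ha0 ha1
    intro w
    rw [mul_comm α w]
    exact (hmain w).2
  · intro L hL
    constructor
    · intro hs
      rcases line_cases L hL with rfl | ⟨a, rfl⟩ | ⟨a, w, rfl⟩
      · exact Or.inl rfl
      · right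
        refine ⟨a, ?_, rfl⟩
        by_contra hno
        rw [← hβ] at hno
        push Not at hno
        rw [hd.secYaX] at hs
        simp [hno] at hs
        omega
      · rw [hd.secZ ha0 ha1 hb0 hb1 hab] at hs
        have := hcnt a w
        omega
    · rintro (rfl | ⟨a, ha, rfl⟩)
      · rw [hd.secX0, hW]
      · rw [hd.secYaX]
        rw [← hβ] at ha
        rcases ha with rfl | rfl | rfl | rfl
        · rw [← hS, ← ncard_shift S 0]
          simp [ha0.symm, hb0.symm]
        · rw [← hS, ← ncard_shift S 1]
          simp [ha1.symm, hb1.symm]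
        · rw [← hS, ← ncard_shift S α']
          simp [ha0, ha1, hab]
        · rw [← hS, ← ncard_shift S β']
          simp [hb0, hb1, hab.symm]
  · have e1 : (1 : K) + 1 = 0 := CharTwo.add_self_eq_zero 1
    have e2 : α + α = 0 := CharTwo.add_self_eq_zero α
    rintro a b (rfl | rfl | rfl | rfl) (rfl | rfl | rfl | rfl)
    all_goals grind
end
end

section
/- Let q = 2^h with h ≥ 4 and let A be an elation KM-arc of type q/4 in PG(2,q). Then A is a translation KM-arc: there exists a line ℓ of PG(2,q) such that the group of all elations of PG(2,q) with axis ℓ that stabilise A acts transitively on A \ ℓ. -/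
open scoped Classical

noncomputable section

variable {K : Type*} [Field K]

section Comb
open Finset

theorem km_fiber {K : Type*} [Field K] [Fintype K] (q t n : ℕ)
    (hq : Fintype.card K = q) (hqt : q = 4 * t)
    (β : K → K → ℕ) (τ : K → ℕ)
    (hline : ∀ m k, (∑ y, β y (m * y + k)) + τ m = 0 ∨ (∑ y, β y (m * y + k)) + τ m = 2)
    (htot : (∑ y, ∑ z, β y z) + (∑ m, τ m) + n = q + t)
    (y z : K) (h1 : β y z = 1) : (∑ z', β y z') + n = t := by
  have e1 : ∀ m, (∑ y', β y' (m * (y' - y) + z)) + τ m = 2 := by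
    intro m
    have h2 := hline m (z - m * y)
    have h3 : ∀ y', m * y' + (z - m * y) = m * (y' - y) + z := fun y' => by ring
    simp only [h3] at h2
    have h4 : 1 ≤ ∑ y', β y' (m * (y' - y) + z) := by
      have := Finset.single_le_sum (f := fun y' => β y' (m * (y' - y) + z))
        (fun _ _ => Nat.zero_le _) (Finset.mem_univ y)
      simpa [h1] using this
    omega
  have e2 : (∑ m, ∑ y', β y' (m * (y' - y) + z)) + ∑ m, τ m = 2 * q := by
    rw [← Finset.sum_add_distrib, Finset.sum_congr rfl (fun m _ => e1 m)]
    simp [hq, mul_comm]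
  rw [Finset.sum_comm, ← Finset.add_sum_erase _ _ (Finset.mem_univ y)] at e2
  have e3 : ∑ y' ∈ univ.erase y, ∑ m, β y' (m * (y' - y) + z)
      = ∑ y' ∈ univ.erase y, ∑ z', β y' z' := by
    apply Finset.sum_congr rfl
    intro y' hy'
    have hne : y' - y ≠ 0 := sub_ne_zero.mpr (Finset.ne_of_mem_erase hy')
    exact Fintype.sum_equiv ((Equiv.mulRight₀ _ hne).trans (Equiv.addRight z)) _ _
      (fun m => by simp)
  rw [e3] at e2
  rw [← Finset.add_sum_erase _ _ (Finset.mem_univ y)] at htot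
  simp [h1, hq] at e2
  omega

theorem sum_klein {Q : Type*} [AddCommGroup Q] [Fintype Q] (hc : Fintype.card Q = 4)
    (h2 : ∀ v : Q, v + v = 0) : ∑ v : Q, v = 0 := by
  classical
  obtain ⟨a, ha⟩ : ∃ a : Q, a ∉ ({0} : Finset Q) := by
    by_contra! H
    have : (univ : Finset Q) ⊆ {0} := fun x _ => H x
    have := Finset.card_le_card this
    simp [hc] at this
  obtain ⟨b, hb⟩ : ∃ b : Q, b ∉ ({0, a} : Finset Q) := by
    by_contra! H
    have : (univ : Finset Q) ⊆ {0, a} := fun x _ => H x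
    have := (Finset.card_le_card this).trans Finset.card_le_two
    simp [hc] at this
  simp at ha hb
  have hab : a + b ≠ 0 := by
    intro h; apply hb.2
    have := h2 a
    exact (add_left_cancel (this.trans h.symm)).symm
  have hu : (univ : Finset Q) = {0, a, b, a + b} := by
    symm
    apply Finset.eq_univ_of_card
    rw [hc, Finset.card_eq_succ]
    refine ⟨0, {a, b, a + b}, ?_, rfl, ?_⟩
    · simp [Ne.symm ha, Ne.symm hb.1, Ne.symm hab]
    · rw [Finset.card_eq_three]
      exact ⟨a, b, a + b, Ne.symm hb.2, by simpa using hb.1, by simpa using ha, rfl⟩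
  rw [hu, Finset.sum_insert (by simp [Ne.symm ha, Ne.symm hb.1, Ne.symm hab]),
    Finset.sum_insert (by simp [Ne.symm hb.2, hb.1]), Finset.sum_insert (by simp [ha]),
    Finset.sum_singleton]
  have := h2 (a + b)
  rw [zero_add, ← add_assoc, this]

theorem km_comb {K : Type*} [Field K] [Fintype K] [CharP K 2] (q t : ℕ)
    (hq : Fintype.card K = q) (hqt : q = 4 * t) (ht : 0 < t)
    (B : K → K → Prop) (T : K → Prop)
    (hline : ∀ m k, (∑ y, if B y (m * y + k) then 1 else 0) + (if T m then 1 else 0) = 0 ∨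
      (∑ y, if B y (m * y + k) then 1 else 0) + (if T m then 1 else 0) = 2)
    (htot : (∑ y, ∑ z, if B y z then 1 else 0) + (∑ m, if T m then 1 else 0) = q + t)
    (htrans : ∀ y z z', B y z → B y z' → ∀ u w, B u w → B u (w + (z' - z)))
    (y z y' z' u w : K) (hyz : B y z) (hyz' : B y' z') (huw : B u w) :
    B (u + (y' - y)) (w + (z' - z)) := by
  have hfib : ∀ y z, B y z → (∑ z', if B y z' then 1 else 0) = t := by
    intro y z h
    have := km_fiber q t 0 hq hqt (fun y z => if B y z then 1 else 0)
      (fun m => if T m then 1 else 0) hline (by simpa using htot) y z (by simp [h])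
    simpa using this
  let S : AddSubgroup K :=
    { carrier := {s | ∀ u w, B u w ↔ B u (w + s)}
      zero_mem' := by simp
      add_mem' := by
        intro a b ha hb u w
        rw [ha u w, hb u (w + a), add_assoc]
      neg_mem' := by
        intro a ha u w
        have := ha u (w + -a)
        rw [this]; simp }
  have hSmem : ∀ s, s ∈ S ↔ ∀ u w, B u w ↔ B u (w + s) := fun s => Iff.rfl
  have hSS : ∀ y z z', B y z → (B y z' ↔ z' - z ∈ S) := by
    intro y z z' h
    constructor
    · intro h' u w
      refine ⟨htrans y z z' h h' u w, fun h2 => ?_⟩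
      have := htrans y z' z h' h _ _ h2
      rwa [add_assoc, sub_add_sub_cancel, sub_self, add_zero] at this
    · intro h'
      have := (h' y z).1 h
      simpa using this
  have hScard : Nat.card S = t := by
    rw [← hfib y z hyz, Finset.sum_boole, Nat.cast_id, ← Fintype.card_subtype,
      ← Nat.card_eq_fintype_card]
    refine Nat.card_congr
      ⟨fun s => ⟨z + s, (s.2 y z).1 hyz⟩, fun x => ⟨x.1 - z, (hSS y z x.1 hyz).1 x.2⟩, ?_, ?_⟩
    · intro s; simp
    · intro s; simp
  have hQ : Fintype.card (K ⧸ S) = 4 := by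
    have := AddSubgroup.card_eq_card_quotient_mul_card_addSubgroup S
    rw [hScard, Nat.card_eq_fintype_card, hq, hqt, Nat.card_eq_fintype_card] at this
    exact (Nat.eq_of_mul_eq_mul_right ht this).symm
  have hQ2 : ∀ v : K ⧸ S, v + v = 0 := by
    intro v
    obtain ⟨x, rfl⟩ := QuotientAddGroup.mk_surjective v
    rw [← QuotientAddGroup.mk_add, CharTwo.add_self_eq_zero]; rfl
  set Y : Finset K := univ.filter (fun y => ∃ z, B y z) with hY
  have hc : ∀ y, ∃ c, y ∈ Y → B y c := by
    intro y
    by_cases h : ∃ z, B y z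
    · exact ⟨h.choose, fun _ => h.choose_spec⟩
    · exact ⟨0, fun h' => absurd (by simpa [hY] using h') h⟩
  choose c hc using hc
  have hYm : ∀ y z, B y z → y ∈ Y := fun y z h => by simp only [hY, mem_filter, mem_univ, true_and]; exact ⟨z, h⟩
  have hB : ∀ y z, B y z ↔ y ∈ Y ∧ z - c y ∈ S := by
    intro y z
    constructor
    · intro h; exact ⟨hYm y z h, (hSS _ _ _ (hc y (hYm y z h))).1 h⟩
    · rintro ⟨h, h'⟩; exact (hSS _ _ _ (hc y h)).2 h'
  have hsumB : (∑ y, ∑ z, if B y z then 1 else 0) = #Y * t := by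
    rw [← Finset.sum_subset (Finset.subset_univ Y)]
    · rw [Finset.sum_congr rfl (fun y hy => hfib y _ (hc y hy))]; simp
    · intro x _ hx
      apply Finset.sum_eq_zero
      intro z _
      rw [if_neg]; exact fun h => hx (hYm _ _ h)
  -- fibres of the slope map
  let g : K → K → K ⧸ S := fun m y => ((c y - m * y : K) : K ⧸ S)
  have hg : ∀ m k : K, #(Y.filter (fun y => g m y = (k : K ⧸ S)))
      = ∑ y, if B y (m * y + k) then 1 else 0 := by
    intro m k
    rw [Finset.sum_boole, Nat.cast_id]
    congr 1
    ext y
    simp only [mem_filter, mem_univ, true_and, hB, g, QuotientAddGroup.eq]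
    have : -(c y - m * y) + k = m * y + k - c y := by ring
    rw [this]
  have hY4 : #Y = 4 := by
    by_cases hT : ∃ m, T m
    · obtain ⟨m, hm⟩ := hT
      have h1 : #Y = ∑ v : K ⧸ S, #(Y.filter (fun y => g m y = v)) :=
        Finset.card_eq_sum_card_fiberwise (fun _ _ => mem_coe.2 (mem_univ _))
      rw [h1, Finset.sum_congr rfl (g := fun _ => 1)]
      · simp [hQ]
      · intro v _
        obtain ⟨k, rfl⟩ := QuotientAddGroup.mk_surjective v
        have := hline m k
        rw [hg]
        simp only [hm, if_true] at this
        omega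
    · push Not at hT
      exfalso
      have h1 : #Y = ∑ v : K ⧸ S, #(Y.filter (fun y => g 0 y = v)) :=
        Finset.card_eq_sum_card_fiberwise (fun _ _ => mem_coe.2 (mem_univ _))
      have h2 : Even #Y := by
        rw [h1]
        apply Finset.even_sum
        intro v _
        obtain ⟨k, rfl⟩ := QuotientAddGroup.mk_surjective v
        have := hline 0 k
        rw [hg]
        simp only [hT, if_false] at this
        rcases this with h | h
        · rw [add_zero] at h; rw [h]; decide
        · rw [add_zero] at h; rw [h]; decide
      rw [hsumB] at htot
      simp [hT] at htot
      have : #Y * t = 5 * t := by omega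
      rw [Nat.eq_of_mul_eq_mul_right ht this] at h2
      revert h2; decide
  have hsum : ∀ m, ∑ y ∈ Y, g m y = 0 := by
    intro m
    have h1 : ∑ y ∈ Y, g m y = ∑ v : K ⧸ S, #(Y.filter (fun y => g m y = v)) • v := by
      rw [← Finset.sum_fiberwise_of_maps_to (g := g m) (t := univ) (fun _ _ => mem_univ _)]
      apply Finset.sum_congr rfl
      intro v _
      rw [Finset.sum_congr rfl (fun y hy => (mem_filter.1 hy).2)]
      simp
    rw [h1]
    by_cases hm : T m
    · rw [Finset.sum_congr rfl (g := fun v => v)]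
      · exact sum_klein hQ hQ2
      · intro v _
        obtain ⟨k, rfl⟩ := QuotientAddGroup.mk_surjective v
        have := hline m k
        simp only [hm, if_true] at this
        rw [hg, show (∑ y, if B y (m * y + k) then 1 else 0) = 1 by omega, one_smul]
    · apply Finset.sum_eq_zero
      intro v _
      obtain ⟨k, rfl⟩ := QuotientAddGroup.mk_surjective v
      have := hline m k
      simp only [hm, if_false, add_zero] at this
      rw [hg]
      rcases this with h | h
      · rw [h]; exact zero_nsmul _
      · rw [h]; exact (two_nsmul _).trans (hQ2 _)
  have hsumS : ∀ m, ∑ y ∈ Y, (c y - m * y) ∈ S := by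
    intro m
    rw [← QuotientAddGroup.eq_zero_iff, ← hsum m]
    exact map_sum (QuotientAddGroup.mk' S) _ _
  have hcS : ∑ y ∈ Y, c y ∈ S := by simpa using hsumS 0
  have hY0 : ∑ y ∈ Y, y = 0 := by
    by_contra hne
    have hall : ∀ x : K, x ∈ S := by
      intro x
      have h1 := S.sub_mem hcS (hsumS (x / ∑ y ∈ Y, y))
      rw [Finset.sum_sub_distrib, sub_sub_cancel, ← Finset.mul_sum, div_mul_cancel₀ _ hne] at h1
      exact h1
    have : S = ⊤ := by ext; simp [hall]
    have h3 : Nat.card S = q := by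
      rw [this, ← hq, ← Nat.card_eq_fintype_card]; exact AddSubgroup.card_top
    omega
  -- conclusion
  have hy := hYm _ _ hyz
  have hy' := hYm _ _ hyz'
  have hu := hYm _ _ huw
  have kz := ((hB _ _).1 hyz).2
  have kz' := ((hB _ _).1 hyz').2
  have kw := ((hB _ _).1 huw).2
  have neg : ∀ x : K, -x = x := fun x => CharTwo.neg_eq x
  have two : ∀ x : K, x + x = 0 := fun x => CharTwo.add_self_eq_zero x
  by_cases h1 : u = y
  · subst h1
    rw [add_sub_cancel, hB]
    refine ⟨hy', ?_⟩
    have := S.add_mem (S.sub_mem kw kz) kz'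
    convert this using 1; ring
  by_cases h2 : y = y'
  · subst h2
    rw [sub_self, add_zero, hB]
    refine ⟨hu, ?_⟩
    have := S.add_mem (S.sub_mem kw kz) kz'
    convert this using 1; ring
  by_cases h3 : u = y'
  · subst h3
    have e : u + (u - y) = y := by
      have := two u; rw [← add_sub_assoc, this, zero_sub, neg]
    rw [e, hB]
    refine ⟨hy, ?_⟩
    have := S.add_mem (S.sub_mem kw kz) kz'
    have e2 : w + (z' - z) - c y = (w - c u - (z - c y) + (z' - c u)) + (c u + c u) - (c y + c y) := by ring
    rw [e2, two, two]; simpa using this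
  have hu' : u ∈ (Y.erase y).erase y' := by
    simp [h1, h3, hu]
  have hy'' : y' ∈ Y.erase y := by simp [hy', Ne.symm h2]
  have hcard : #(((Y.erase y).erase y').erase u) = 1 := by
    rw [card_erase_of_mem hu', card_erase_of_mem hy'', card_erase_of_mem hy, hY4]
  obtain ⟨x, hx⟩ := card_eq_one.1 hcard
  have split : ∀ f : K → K, ∑ y ∈ Y, f y = f y + (f y' + (f u + f x)) := by
    intro f
    rw [← add_sum_erase _ _ hy, ← add_sum_erase _ _ hy'', ← add_sum_erase _ _ hu', hx,
      sum_singleton]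
  have hxY : x ∈ Y := by
    have : x ∈ ((Y.erase y).erase y').erase u := by rw [hx]; simp
    simp only [mem_erase] at this
    exact this.2.2.2
  have ex : u + (y' - y) = x := by
    rw [split] at hY0
    have e2 : u + (y' - y) = (y + (y' + (u + x))) - (y + y) - x := by ring
    rw [e2, hY0, two]; simp [neg]
  rw [ex, hB]
  refine ⟨hxY, ?_⟩
  rw [split] at hcS
  have := S.add_mem (S.add_mem (S.sub_mem kw kz) kz') hcS
  have e2 : w + (z' - z) - c x = (w - c u - (z - c y) + (z' - c y') + (c y + (c y' + (c u + c x))))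
    - (c y + c y) - (c x + c x) := by ring
  rw [e2, two, two]; simpa using this

end Comb
section Geom
open Finset

variable (e : (Fin 3 → K) ≃ₗ[K] (Fin 3 → K))

/-- Affine point in the coordinate frame `e`. -/
def ap (y z : K) : Pt K := Projectivization.mk K (e.symm ![1, y, z])
  (by rw [LinearEquiv.map_ne_zero_iff]; intro h; simpa using congrFun h 0)

/-- Point at infinity. -/
def ip (m : K) : Pt K := Projectivization.mk K (e.symm ![0, 1, m])
  (by rw [LinearEquiv.map_ne_zero_iff]; intro h; simpa using congrFun h 1)

/-- The nucleus. -/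
def np : Pt K := Projectivization.mk K (e.symm ![0, 0, 1])
  (by rw [LinearEquiv.map_ne_zero_iff]; intro h; simpa using congrFun h 2)

/-- The functional in the frame. -/
def lnf (a b c : K) : (Fin 3 → K) →ₗ[K] K :=
  (a • LinearMap.proj 0 + b • LinearMap.proj 1 + c • LinearMap.proj 2) ∘ₗ e.toLinearMap

/-- The line `aX+bY+cZ=0` in the frame. -/
def ln (a b c : K) : Submodule K (Fin 3 → K) := LinearMap.ker (lnf e a b c)

theorem mem_ln (a b c : K) (v : Fin 3 → K) :
    v ∈ ln e a b c ↔ a * e v 0 + b * e v 1 + c * e v 2 = 0 := by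
  simp [ln, lnf]

theorem onLine_mk (v : Fin 3 → K) (hv : v ≠ 0) (L : Submodule K (Fin 3 → K)) :
    OnLine (Projectivization.mk K v hv) L ↔ v ∈ L := by
  rw [OnLine, Projectivization.submodule_mk, Submodule.span_singleton_le_iff_mem]

theorem ap_on (a b c y z : K) : OnLine (ap e y z) (ln e a b c) ↔ a + b * y + c * z = 0 := by
  rw [ap, onLine_mk, mem_ln]; simp

theorem ip_on (a b c m : K) : OnLine (ip e m) (ln e a b c) ↔ b + c * m = 0 := by
  rw [ip, onLine_mk, mem_ln]; simp

theorem np_on (a b c : K) : OnLine (np e) (ln e a b c) ↔ c = 0 := by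
  rw [np, onLine_mk, mem_ln]; simp

theorem isLine_ln (a b c : K) (h : ¬ (a = 0 ∧ b = 0 ∧ c = 0)) : IsLine (ln e a b c) := by
  have hne : lnf e a b c ≠ 0 := by
    intro h0
    apply h
    have h1 : ∀ v, lnf e a b c (e.symm v) = 0 := fun v => by rw [h0]; rfl
    have k0 := h1 ![1, 0, 0]
    have k1 := h1 ![0, 1, 0]
    have k2 := h1 ![0, 0, 1]
    simp [lnf] at k0 k1 k2
    exact ⟨k0, k1, k2⟩
  have := Module.Dual.finrank_ker_add_one_of_ne_zero hne
  simp at this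
  exact this

theorem ap_inj {y z y' z' : K} (h : ap e y z = ap e y' z') : y = y' ∧ z = z' := by
  rw [ap, ap, Projectivization.mk_eq_mk_iff'] at h
  obtain ⟨a, ha⟩ := h
  rw [← map_smul] at ha
  have ha := e.symm.injective ha
  have h0 := congrFun ha 0
  have h1 := congrFun ha 1
  have h2 := congrFun ha 2
  simp at h0 h1 h2
  subst h0
  simp at h1 h2
  exact ⟨h1.symm, h2.symm⟩

theorem ip_inj {m m' : K} (h : ip e m = ip e m') : m = m' := by
  rw [ip, ip, Projectivization.mk_eq_mk_iff'] at h
  obtain ⟨a, ha⟩ := h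
  rw [← map_smul] at ha
  have ha := e.symm.injective ha
  have h1 := congrFun ha 1
  have h2 := congrFun ha 2
  simp at h1 h2
  subst h1
  simp at h2
  exact h2.symm

theorem ap_ne_of_on0 {y z : K} {P : Pt K} (h : OnLine P (ln e 1 0 0)) : ap e y z ≠ P := by
  rintro rfl
  rw [ap_on] at h
  simp at h

theorem ip_ne_np {m : K} : ip e m ≠ np e := by
  intro h
  have := (np_on e 0 1 0).2 rfl
  rw [← h, ip_on] at this
  simp at this

theorem pt_cases (P : Pt K) :
    (∃ y z, P = ap e y z) ∨ (∃ m, P = ip e m) ∨ P = np e := by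
  induction P using Projectivization.ind with
  | h v hv =>
  by_cases h0 : e v 0 = 0
  · by_cases h1 : e v 1 = 0
    · right; right
      rw [np, Projectivization.mk_eq_mk_iff']
      refine ⟨e v 2, ?_⟩
      rw [← map_smul, LinearEquiv.symm_apply_eq]
      ext i; fin_cases i <;> simp [h0, h1]
    · right; left
      refine ⟨e v 2 / e v 1, ?_⟩
      rw [ip, Projectivization.mk_eq_mk_iff']
      refine ⟨e v 1, ?_⟩
      rw [← map_smul, LinearEquiv.symm_apply_eq]
      ext i; fin_cases i <;> simp [h0, mul_div_cancel₀ _ h1] <;> field_simp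
  · left
    refine ⟨e v 1 / e v 0, e v 2 / e v 0, ?_⟩
    rw [ap, Projectivization.mk_eq_mk_iff']
    refine ⟨e v 0, ?_⟩
    rw [← map_smul, LinearEquiv.symm_apply_eq]
    ext i; fin_cases i <;> simp <;> field_simp

theorem ncard_pts [Fintype K] (C : Set (Pt K)) :
    C.ncard = (∑ y, ∑ z, if ap e y z ∈ C then 1 else 0) + (∑ m, if ip e m ∈ C then 1 else 0)
      + if np e ∈ C then 1 else 0 := by
  let F : (K × K) ⊕ (K ⊕ Unit) → Pt K :=
    Sum.elim (fun p => ap e p.1 p.2) (Sum.elim (fun m => ip e m) (fun _ => np e))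
  have hF : Function.Bijective F := by
    constructor
    · rintro (⟨y, z⟩ | m | _) (⟨y', z'⟩ | m' | _) h <;> simp only [F, Sum.elim_inl, Sum.elim_inr] at h
      · obtain ⟨rfl, rfl⟩ := ap_inj e h; rfl
      · exact absurd h (ap_ne_of_on0 e (by rw [ip_on]; simp))
      · exact absurd h (ap_ne_of_on0 e (by rw [np_on]))
      · exact absurd h.symm (ap_ne_of_on0 e (by rw [ip_on]; simp))
      · obtain rfl := ip_inj e h; rfl
      · exact absurd h (ip_ne_np e)
      · exact absurd h.symm (ap_ne_of_on0 e (by rw [np_on]))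
      · exact absurd h.symm (ip_ne_np e)
      · rfl
    · intro P
      rcases pt_cases e P with ⟨y, z, rfl⟩ | ⟨m, rfl⟩ | rfl
      · exact ⟨Sum.inl (y, z), rfl⟩
      · exact ⟨Sum.inr (Sum.inl m), rfl⟩
      · exact ⟨Sum.inr (Sum.inr ()), rfl⟩
  have h1 : C.ncard = (F ⁻¹' C).ncard := by
    rw [← Set.ncard_image_of_injective _ hF.1, Set.image_preimage_eq _ hF.2]
  rw [h1, Set.ncard_eq_toFinset_card', Set.toFinset_card, Fintype.card_subtype, Finset.card_filter]
  simp only [Fintype.sum_sum_type, Fintype.sum_prod_type, Set.mem_preimage, F, Sum.elim_inl,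
    Sum.elim_inr]
  simp only [add_assoc, univ_unique, sum_singleton]
  congr!

/-- secant count of a non-vertical line -/
theorem sc_L [Fintype K] (A : Set (Pt K)) (m k : K) :
    secantCount A (ln e k m (-1)) = (∑ y, if ap e y (m * y + k) ∈ A then 1 else 0)
      + (if ip e m ∈ A then 1 else 0) := by
  rw [secantCount, ncard_pts e]
  have h1 : ∀ y z, ap e y z ∈ {P ∈ A | OnLine P (ln e k m (-1))} ↔
      z = m * y + k ∧ ap e y z ∈ A := by
    intro y z
    rw [Set.mem_sep_iff, ap_on, and_comm]
    refine and_congr_left fun _ => ⟨fun h => ?_, fun h => ?_⟩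
    · linear_combination -h
    · rw [h]; ring
  have h2 : ∀ m', ip e m' ∈ {P ∈ A | OnLine P (ln e k m (-1))} ↔
      m' = m ∧ ip e m' ∈ A := by
    intro y
    rw [Set.mem_sep_iff, ip_on, and_comm]
    refine and_congr_left fun _ => ⟨fun h => ?_, fun h => ?_⟩
    · linear_combination -h
    · rw [h]; ring
  have h3 : np e ∉ {P ∈ A | OnLine P (ln e k m (-1))} := by
    rw [Set.mem_sep_iff, np_on]; simp
  simp only [h1, h2, h3, ite_and, if_false, Finset.sum_ite_eq', Finset.sum_ite_eq, mem_univ, if_true, add_zero]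

theorem sc_M [Fintype K] (A : Set (Pt K)) (y : K) :
    secantCount A (ln e (-y) 1 0) = (∑ z, if ap e y z ∈ A then 1 else 0)
      + (if np e ∈ A then 1 else 0) := by
  rw [secantCount, ncard_pts e]
  have h1 : ∀ y' z, ap e y' z ∈ {P ∈ A | OnLine P (ln e (-y) 1 0)} ↔
      y' = y ∧ ap e y' z ∈ A := by
    intro y' z
    rw [Set.mem_sep_iff, ap_on, and_comm]
    refine and_congr_left fun _ => ⟨fun h => ?_, fun h => ?_⟩
    · linear_combination h
    · rw [h]; ring
  have h2 : ∀ m', ip e m' ∉ {P ∈ A | OnLine P (ln e (-y) 1 0)} := by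
    intro y
    rw [Set.mem_sep_iff, ip_on]; simp
  have h3 : np e ∈ {P ∈ A | OnLine P (ln e (-y) 1 0)} ↔ np e ∈ A := by
    rw [Set.mem_sep_iff, np_on]; simp
  rw [Finset.sum_comm]
  simp only [h1, h2, h3, ite_and, if_false, Finset.sum_ite_eq', Finset.sum_ite_eq, mem_univ, if_true, add_zero, Finset.sum_const_zero]

/-- Existence of an adapted frame. -/
theorem exists_frame (N : Pt K) (linf : Submodule K (Fin 3 → K)) (hl : IsLine linf)
    (hN : OnLine N linf) :
    ∃ e : (Fin 3 → K) ≃ₗ[K] (Fin 3 → K), N = np e ∧ linf = ln e 1 0 0 := by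
  induction N using Projectivization.ind with
  | h n hn =>
  rw [onLine_mk] at hN
  obtain ⟨e1, he1, hs⟩ : ∃ x ∈ linf, x ∉ K ∙ n := by
    by_contra! H
    have h1 := Submodule.finrank_mono (show linf ≤ K ∙ n from H)
    rw [finrank_span_singleton hn, hl] at h1
    omega
  obtain ⟨e0, he0⟩ : ∃ x, x ∉ linf := by
    by_contra! H
    have : linf = ⊤ := by ext; simp [H]
    rw [IsLine, this, finrank_top] at hl
    simp at hl
  have key : ∀ a b c : K, a • e0 + b • e1 + c • n ∈ linf → a = 0 := by
    intro a b c h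
    by_contra ha
    apply he0
    have h1 : a • e0 ∈ linf := by
      have := linf.sub_mem (linf.sub_mem h (linf.smul_mem c hN)) (linf.smul_mem b he1)
      convert this using 1; abel
    exact (Submodule.smul_mem_iff _ ha).1 h1
  have hli : LinearIndependent K ![e0, e1, n] := by
    rw [Fintype.linearIndependent_iff]
    intro g hg
    simp only [Fin.sum_univ_three, Matrix.cons_val] at hg
    have h0 := key _ _ _ (by rw [hg]; exact linf.zero_mem)
    rw [h0, zero_smul, zero_add] at hg
    have h1 : g 1 = 0 := by
      by_contra h1
      apply hs
      refine (Submodule.smul_mem_iff _ h1).1 ?_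
      rw [eq_neg_of_add_eq_zero_left hg]
      exact Submodule.neg_mem _ (Submodule.smul_mem _ _ (Submodule.mem_span_singleton_self n))
    rw [h1, zero_smul, zero_add] at hg
    have h2 : g 2 = 0 := (smul_eq_zero.1 hg).resolve_right hn
    intro i; fin_cases i <;> assumption
  let b := basisOfLinearIndependentOfCardEqFinrank hli (by simp)
  have hb : ∀ v, b.equivFun.symm v = v 0 • e0 + v 1 • e1 + v 2 • n := by
    intro v
    rw [Module.Basis.equivFun_symm_apply, Fin.sum_univ_three]
    simp [b]
  refine ⟨b.equivFun, ?_, ?_⟩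
  · rw [np, Projectivization.mk_eq_mk_iff']
    refine ⟨1, ?_⟩
    rw [hb]; simp
  · ext v
    rw [mem_ln]
    have hv := hb (b.equivFun v)
    rw [LinearEquiv.symm_apply_apply] at hv
    generalize b.equivFun v = x at hv
    subst hv
    constructor
    · intro h; simpa using key _ _ _ h
    · intro h
      have : x 0 = 0 := by simpa using h
      rw [this, zero_smul, zero_add]
      exact linf.add_mem (linf.smul_mem _ he1) (linf.smul_mem _ hN)

theorem projMap_mk (f : (Fin 3 → K) ≃ₗ[K] (Fin 3 → K)) (v : Fin 3 → K) (hv : v ≠ 0) :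
    projMap f (Projectivization.mk K v hv) =
      Projectivization.mk K (f v) (by rwa [LinearEquiv.map_ne_zero_iff]) := rfl

/-- Structure of elations. -/
theorem elation_form (f : (Fin 3 → K) ≃ₗ[K] (Fin 3 → K))
    (hf : IsElationAxis f (ln e 1 0 0)) :
    ∃ a b : K, ∀ y z, projMap f (ap e y z) = ap e (y + a) (z + b) := by
  obtain ⟨R, -, hR, hfix, hM⟩ := hf
  have hfix' : ∀ v : Fin 3 → K, v ≠ 0 → v 0 = 0 → ∃ c : K, f (e.symm v) = c • e.symm v := by
    intro v hv hv0
    have := hfix (Projectivization.mk K (e.symm v) (by rwa [LinearEquiv.map_ne_zero_iff]))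
      (by rw [onLine_mk, mem_ln]; simp [hv0])
    rw [projMap_mk, Projectivization.mk_eq_mk_iff'] at this
    obtain ⟨c, hc⟩ := this
    exact ⟨c, hc.symm⟩
  let F : (Fin 3 → K) ≃ₗ[K] (Fin 3 → K) := (e.symm.trans f).trans e
  have hF : ∀ v, f (e.symm v) = e.symm (F v) := by intro v; simp [F]
  obtain ⟨l1, h1⟩ := hfix' ![0, 1, 0] (fun h => by simpa using congrFun h 1) rfl
  obtain ⟨l2, h2⟩ := hfix' ![0, 0, 1] (fun h => by simpa using congrFun h 2) rfl
  obtain ⟨l3, h3⟩ := hfix' ![0, 1, 1] (fun h => by simpa using congrFun h 1) rfl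
  rw [hF, ← map_smul] at h1 h2 h3
  have h1 := e.symm.injective h1
  have h2 := e.symm.injective h2
  have h3 := e.symm.injective h3
  have hdec : (![0, 1, 1] : Fin 3 → K) = ![0, 1, 0] + ![0, 0, 1] := by
    ext i; fin_cases i <;> simp
  rw [hdec, map_add, h1, h2] at h3
  have e13 : l1 = l3 := by simpa using congrFun h3 1
  have e23 : l2 = l3 := by simpa using congrFun h3 2
  subst e13
  subst e23
  have hgen : ∀ y z : K, F ![1, y, z] = F ![1, 0, 0] + ![0, l2 * y, l2 * z] := by
    intro y z
    have hd : (![1, y, z] : Fin 3 → K) = ![1, 0, 0] + (y • ![0, 1, 0] + z • ![0, 0, 1]) := by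
      ext i; fin_cases i <;> simp
    rw [hd, map_add, map_add, map_smul, map_smul, h1, h2]
    ext i; fin_cases i <;> simp [mul_comm]
  set w := F ![1, 0, 0] with hw
  have hl2 : l2 ≠ 0 := by
    rintro rfl
    rw [zero_smul, LinearEquiv.map_eq_zero_iff] at h1
    simpa using congrFun h1 1
  -- use the centre
  have hα : w 0 = l2 := by
    have hcen : ∃ r1 r2 : K, ¬ (r1 = 0 ∧ r2 = 0) ∧
        ∀ a : K, OnLine R (ln e a r2 (-r1)) := by
      rcases pt_cases e R with ⟨y, z, rfl⟩ | ⟨m, rfl⟩ | rfl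
      · rw [ap_on] at hR; simp at hR
      · exact ⟨1, m, by simp, fun a => by rw [ip_on]; ring⟩
      · exact ⟨0, 1, by simp, fun a => by rw [np_on]; ring⟩
    obtain ⟨r1, r2, hr, hRl⟩ := hcen
    have hcon : ∀ y z : K, -(r2 * y - r1 * z) * w 0 + r2 * (w 1 + l2 * y) - r1 * (w 2 + l2 * z) = 0 := by
      intro y z
      have := hM (ln e (-(r2 * y - r1 * z)) r2 (-r1))
        (isLine_ln e _ _ _ (fun h => hr ⟨neg_eq_zero.1 h.2.2, h.2.1⟩)) (hRl _) (ap e y z)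
        (by rw [ap_on]; ring)
      rw [ap, projMap_mk, onLine_mk, hF, hgen, mem_ln] at this
      rw [LinearEquiv.apply_symm_apply] at this
      simp only [Pi.add_apply, Matrix.cons_val, add_zero] at this
      linear_combination this
    have c0 := hcon 0 0
    by_cases hr1 : r1 = 0
    · have hr2 : r2 ≠ 0 := fun h => hr ⟨hr1, h⟩
      have c1 := hcon 1 0
      have : r2 * (w 0 - l2) = 0 := by linear_combination c0 - c1
      exact sub_eq_zero.1 ((mul_eq_zero.1 this).resolve_left hr2)
    · have c1 := hcon 0 1
      have : r1 * (w 0 - l2) = 0 := by linear_combination c1 - c0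
      exact sub_eq_zero.1 ((mul_eq_zero.1 this).resolve_left hr1)
  refine ⟨w 1 / l2, w 2 / l2, fun y z => ?_⟩
  rw [ap, projMap_mk, ap, Projectivization.mk_eq_mk_iff']
  refine ⟨l2, ?_⟩
  rw [hF, hgen, ← map_smul]
  congr 1
  ext i; fin_cases i <;> simp [hα] <;> field_simp <;> ring

/-- The translation by `(a,b)` as a linear map in standard coordinates. -/
def trLin (a b : K) : (Fin 3 → K) →ₗ[K] (Fin 3 → K) where
  toFun v := ![v 0, v 1 + a * v 0, v 2 + b * v 0]
  map_add' v w := by ext i; fin_cases i <;> simp <;> ring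
  map_smul' c v := by ext i; fin_cases i <;> simp <;> ring

/-- The translation by `(a,b)`. -/
def trEq (a b : K) : (Fin 3 → K) ≃ₗ[K] (Fin 3 → K) :=
  LinearEquiv.ofLinear (trLin a b) (trLin (-a) (-b))
    (by ext i j; fin_cases i <;> fin_cases j <;> simp [trLin])
    (by ext i j; fin_cases i <;> fin_cases j <;> simp [trLin])

/-- The translation in the frame. -/
def trF (a b : K) : (Fin 3 → K) ≃ₗ[K] (Fin 3 → K) := (e.trans (trEq a b)).trans e.symm

theorem e_trF (a b : K) (v : Fin 3 → K) :
    e (trF e a b v) = ![e v 0, e v 1 + a * e v 0, e v 2 + b * e v 0] := by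
  simp [trF, trEq, trLin]

theorem trF_ap (a b y z : K) : projMap (trF e a b) (ap e y z) = ap e (y + a) (z + b) := by
  rw [ap, projMap_mk, ap]
  congr 1
  rw [LinearEquiv.eq_symm_apply, e_trF]; simp

theorem trF_fix (a b : K) (P : Pt K) (hP : OnLine P (ln e 1 0 0)) :
    projMap (trF e a b) P = P := by
  induction P using Projectivization.ind with
  | h v hv =>
  rw [onLine_mk, mem_ln] at hP
  rw [projMap_mk]
  congr 1
  apply e.injective
  rw [e_trF]
  have : e v 0 = 0 := by simpa using hP
  ext i; fin_cases i <;> simp [this]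

theorem trF_elation (a b : K) : IsElationAxis (trF e a b) (ln e 1 0 0) := by
  have hline := isLine_ln e 1 0 0 (by simp)
  by_cases hab : a = 0 ∧ b = 0
  · obtain ⟨rfl, rfl⟩ := hab
    refine ⟨np e, hline, by rw [np_on], trF_fix e 0 0, fun M _ _ P hP => ?_⟩
    have : projMap (trF e 0 0) P = P := by
      rcases pt_cases e P with ⟨y, z, rfl⟩ | ⟨m, rfl⟩ | rfl
      · rw [trF_ap]; simp
      · exact trF_fix e 0 0 _ (by rw [ip_on]; simp)
      · exact trF_fix e 0 0 _ (by rw [np_on])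
    rwa [this]
  · have hne : e.symm ![0, a, b] ≠ 0 := by
      rw [LinearEquiv.map_ne_zero_iff]
      intro h
      exact hab ⟨by simpa using congrFun h 1, by simpa using congrFun h 2⟩
    refine ⟨Projectivization.mk K _ hne, hline, by rw [onLine_mk, mem_ln]; simp, trF_fix e a b,
      fun M _ hRM P hP => ?_⟩
    induction P using Projectivization.ind with
    | h v hv =>
    rw [onLine_mk] at hRM hP
    rw [projMap_mk, onLine_mk]
    have : trF e a b v = v + e v 0 • e.symm ![0, a, b] := by
      apply e.injective
      rw [e_trF, map_add, map_smul, LinearEquiv.apply_symm_apply]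
      ext i; fin_cases i <;> simp [mul_comm]
    rw [this]
    exact M.add_mem hP (M.smul_mem _ hRM)

end Geom

/-- Theorem 3.12: every elation KM-arc of type `q/4` in `PG(2,q)` is a
translation KM-arc. -/
theorem elation_q4_is_translation
    {K : Type*} [Field K] [Fintype K] (h : ℕ) (hh : 4 ≤ h)
    (hcard : Fintype.card K = 2 ^ h)
    (A : Set (Pt K)) (N : Pt K) (linf : Submodule K (Fin 3 → K))
    (hA : IsElationKMArc (2 ^ h) (2 ^ h / 4) A N linf) :
    ∃ l : Submodule K (Fin 3 → K), IsTranslationKMArc A l := by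
  obtain ⟨⟨hAc, hsec⟩, hl, hN, hnuc, htr⟩ := hA
  haveI : Fact (Nat.Prime 2) := ⟨Nat.prime_two⟩
  haveI : CharP K 2 := charP_of_card_eq_prime_pow hcard
  have hq4 : 2 ^ h = 4 * (2 ^ h / 4) := by
    obtain ⟨j, rfl⟩ := Nat.exists_eq_add_of_le hh
    rw [pow_add]; omega
  have ht4 : 4 ≤ 2 ^ h / 4 := by
    have : 2 ^ 4 ≤ 2 ^ h := Nat.pow_le_pow_right (by norm_num) hh
    omega
  generalize hq : 2 ^ h = q at *
  generalize ht : q / 4 = t at *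
  obtain ⟨e, rfl, rfl⟩ := exists_frame N linf hl hN
  refine ⟨ln e 1 0 0, hl, ?_⟩
  have hline : ∀ m k, (∑ y, if ap e y (m * y + k) ∈ A then 1 else 0)
      + (if ip e m ∈ A then 1 else 0) = 0 ∨ (∑ y, if ap e y (m * y + k) ∈ A then 1 else 0)
      + (if ip e m ∈ A then 1 else 0) = 2 := by
    intro m k
    have hL := isLine_ln e k m (-1) (by simp)
    rw [← sc_L]
    rcases hsec _ hL with h1 | h1 | h1
    · exact Or.inl h1
    · exact Or.inr h1
    · have := hnuc _ hL h1
      rw [np_on] at this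
      simp at this
  have htot := hAc
  rw [ncard_pts e] at htot
  have hfib : ∀ y z, ap e y z ∈ A → secantCount A (ln e (-y) 1 0) = t := by
    intro y z hyz
    rw [sc_M]
    exact km_fiber q t _ hcard hq4 (fun y z => if ap e y z ∈ A then 1 else 0)
      (fun m => if ip e m ∈ A then 1 else 0) hline htot y z (by simp [hyz])
  have hMl : ∀ y, IsLine (ln e (-y) 1 0) := fun y => isLine_ln e _ _ _ (by simp)
  have hMne : ∀ y, ln e (-y) 1 0 ≠ ln e 1 0 0 := by
    intro y heq
    have h1 : OnLine (ip e 0) (ln e (-y) 1 0) := by rw [heq, ip_on]; simp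
    rw [ip_on] at h1; simp at h1
  intro P hP hPl Q hQ hQl
  have haff : ∀ P, ¬ OnLine P (ln e 1 0 0) → ∃ y z, P = ap e y z := by
    intro P hP
    rcases pt_cases e P with h1 | ⟨m, rfl⟩ | rfl
    · exact h1
    · rw [ip_on] at hP; simp at hP
    · rw [np_on] at hP; simp at hP
  obtain ⟨y, z, rfl⟩ := haff P hPl
  obtain ⟨y', z', rfl⟩ := haff Q hQl
  have hMon : ∀ y z, OnLine (ap e y z) (ln e (-y) 1 0) := by
    intro y z; rw [ap_on]; ring
  have hNA : np e ∉ A := by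
    intro hNA
    obtain ⟨f, ⟨R, -, -, hfix, -⟩, -, hf⟩ := htr _ (hMl y) (hfib y z hP) (hMne y) _ hNA
      (by rw [np_on]) _ hP (hMon y z)
    rw [hfix _ hN] at hf
    exact ap_ne_of_on0 e hN hf.symm
  rw [if_neg hNA, add_zero] at htot
  have htrans : ∀ y z z', ap e y z ∈ A → ap e y z' ∈ A → ∀ u w, ap e u w ∈ A →
      ap e u (w + (z' - z)) ∈ A := by
    intro y z z' h1 h2 u w h3
    obtain ⟨f, hf, hst, hfP⟩ := htr _ (hMl y) (hfib y z h1) (hMne y) _ h1 (hMon y z) _ h2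
      (hMon y z')
    obtain ⟨a, b, hab⟩ := elation_form e f hf
    rw [hab] at hfP
    obtain ⟨ha, hb⟩ := ap_inj e hfP
    have h4 : projMap f (ap e u w) ∈ A := by rw [← hst]; exact ⟨_, h3, rfl⟩
    rw [hab] at h4
    have ha : a = 0 := by simpa using ha
    rwa [ha, add_zero, show b = z' - z by rw [← hb]; ring] at h4
  have key := fun u w hu => km_comb q t hcard hq4 (by omega) (fun y z => ap e y z ∈ A)
    (fun m => ip e m ∈ A) hline htot htrans y z y' z' u w hP hQ hu
  refine ⟨trF e (y' - y) (z' - z), trF_elation e _ _, ?_, ?_⟩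
  · have hfin : A.Finite := Set.finite_of_ncard_ne_zero (by omega)
    apply Set.eq_of_subset_of_ncard_le _ _ hfin
    · rintro _ ⟨P, hPA, rfl⟩
      by_cases hPl : OnLine P (ln e 1 0 0)
      · rwa [trF_fix e _ _ P hPl]
      · obtain ⟨u, w, rfl⟩ := haff P hPl
        rw [trF_ap]
        exact key u w hPA
    · exact (Set.ncard_image_of_injective A (Projectivization.map_injective _ _)).ge
  · rw [trF_ap]; simp
end
end
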